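/- arXiv:1804.10841 — 7 statements merged into one kernel-verified Lean document; each statement's English description precedes it below -/
import Mathlib

section
/- Let 0 < p < 1. There exists a constant C > 0 depending only on p such that for every continuously differentiable function g : ℝ → ℝ that is square-integrable, satisfies g(x) → 0 as x → ±∞, and has Q := ∫_ℝ (1+g'(x)²)^{(p-1)/2} g'(x)² dx < ∞, one has (sup_{x∈ℝ} |g(x)|)² ≤ C · Q^{1/2} · ‖g‖_{L²} + C · Q^{2/(3p+1)} · ‖g‖_{L²}^{4p/(3p+1)}. -/
open MeasureTheory Filter

lemma weight_lower (p : ℝ) (hp0 : 0 < p) (hp1 : p < 1) (s : ℝ) (hs : 1 ≤ |s|) :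
    |s| ^ p / 2 * |s| ≤ (1 + s ^ 2) ^ ((p - 1) / 2) * s ^ 2 := by
  have h0 : 0 < |s| := by linarith
  have h1 : 1 + s ^ 2 ≤ 4 * |s| ^ 2 := by nlinarith [sq_abs s]
  have h2 : (4 * |s| ^ 2) ^ ((p - 1) / 2) ≤ (1 + s ^ 2) ^ ((p - 1) / 2) :=
    Real.rpow_le_rpow_of_nonpos (by positivity) h1 (by linarith)
  have h3 : (4 * |s| ^ 2) ^ ((p - 1) / 2) = 2 ^ (p - 1) * |s| ^ (p - 1) := by
    rw [show (4 * |s| ^ 2) = (2 * |s|) ^ (2 : ℝ) by rw [Real.rpow_two]; ring,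
      ← Real.rpow_mul (by positivity), Real.mul_rpow (by norm_num) h0.le]
    congr 2 <;> ring
  have h4 : (1 / 2 : ℝ) ≤ 2 ^ (p - 1) := by
    have := Real.rpow_le_rpow_of_exponent_le (x := 2) (by norm_num) (show (-1 : ℝ) ≤ p - 1 by linarith)
    rw [Real.rpow_neg_one] at this
    linarith
  have h5 : |s| ^ p = |s| ^ (p - 1) * |s| := by
    rw [Real.rpow_sub_one h0.ne']; field_simp
  have h6 : 0 ≤ |s| ^ (p - 1) := by positivity
  rw [← sq_abs s, h5]
  rw [h3] at h2
  rw [sq_abs]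
  calc |s| ^ (p - 1) * |s| / 2 * |s| = (1 / 2 * |s| ^ (p - 1)) * |s| ^ 2 := by ring
    _ ≤ (2 ^ (p - 1) * |s| ^ (p - 1)) * |s| ^ 2 := by gcongr
    _ ≤ (1 + s ^ 2) ^ ((p - 1) / 2) * |s| ^ 2 := by gcongr
    _ = _ := by rw [sq_abs]

lemma weight_small (p : ℝ) (hp0 : 0 < p) (hp1 : p < 1) (s : ℝ) (hs : |s| ≤ 1) :
    |s| / 2 * |s| ≤ (1 + s ^ 2) ^ ((p - 1) / 2) * s ^ 2 := by
  have h1 : 1 + s ^ 2 ≤ 2 := by nlinarith [sq_abs s, abs_nonneg s]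
  have h2 : (2 : ℝ) ^ ((p - 1) / 2) ≤ (1 + s ^ 2) ^ ((p - 1) / 2) :=
    Real.rpow_le_rpow_of_nonpos (by positivity) h1 (by linarith)
  have h4 : (1 / 2 : ℝ) ≤ 2 ^ ((p - 1) / 2) := by
    have := Real.rpow_le_rpow_of_exponent_le (x := 2) (by norm_num)
      (show (-1 : ℝ) ≤ (p - 1) / 2 by linarith)
    rw [Real.rpow_neg_one] at this
    linarith
  calc |s| / 2 * |s| = 1 / 2 * |s| ^ 2 := by ring
    _ ≤ (1 + s ^ 2) ^ ((p - 1) / 2) * |s| ^ 2 := by gcongr; linarith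
    _ = _ := by rw [sq_abs]

lemma young_small (p : ℝ) (hp0 : 0 < p) (hp1 : p < 1) (e : ℝ) (he : 0 < e) (he1 : e ≤ 1) (s : ℝ) :
    e / 2 * |s| ≤ e / 2 * e + (1 + s ^ 2) ^ ((p - 1) / 2) * s ^ 2 := by
  have hW : 0 ≤ (1 + s ^ 2) ^ ((p - 1) / 2) * s ^ 2 := by positivity
  rcases le_total |s| e with h | h
  · have : e / 2 * |s| ≤ e / 2 * e := by gcongr
    linarith
  have h3 : 0 ≤ e / 2 * e := by positivity
  rcases le_total |s| 1 with h1 | h1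
  · have := weight_small p hp0 hp1 s h1
    have h2 : e / 2 * |s| ≤ |s| / 2 * |s| := by gcongr
    linarith
  · have := weight_lower p hp0 hp1 s h1
    have h4 : 1 ≤ |s| ^ p := Real.one_le_rpow h1 hp0.le
    have h2 : e / 2 * |s| ≤ |s| ^ p / 2 * |s| := by gcongr; linarith
    linarith

lemma young_large (p : ℝ) (hp0 : 0 < p) (hp1 : p < 1) (e : ℝ) (he1 : 1 ≤ e) (s : ℝ) :
    e ^ p / 2 * |s| ≤ e ^ p / 2 * e + (1 + s ^ 2) ^ ((p - 1) / 2) * s ^ 2 := by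
  have hW : 0 ≤ (1 + s ^ 2) ^ ((p - 1) / 2) * s ^ 2 := by positivity
  rcases le_total |s| e with h | h
  · have : e ^ p / 2 * |s| ≤ e ^ p / 2 * e := by gcongr
    linarith
  have h3 : 0 ≤ e ^ p / 2 * e := by positivity
  have := weight_lower p hp0 hp1 s (he1.trans h)
  have h2 : e ^ p / 2 * |s| ≤ |s| ^ p / 2 * |s| := by gcongr
  linarith

lemma exists_interval (g : ℝ → ℝ) (hg : Continuous g) (ht : Tendsto g atTop (nhds 0)) (x : ℝ)
    (hx : 0 < |g x|) :
    ∃ y, x < y ∧ |g y| ≤ |g x| / 2 ∧ ∀ z ∈ Set.Ioo x y, |g x| / 2 ≤ |g z| := by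
  set S : Set ℝ := {y | x ≤ y ∧ |g y| ≤ |g x| / 2} with hS
  have hc : IsClosed S :=
    (isClosed_le continuous_const continuous_id).inter (isClosed_le hg.abs continuous_const)
  have hne : S.Nonempty := by
    have h1 : Tendsto (fun y => |g y|) atTop (nhds 0) := by simpa using ht.abs
    have h2 := (h1.eventually (ge_mem_nhds (show (0 : ℝ) < |g x| / 2 by linarith))).and
      (eventually_ge_atTop x)
    obtain ⟨y, hy1, hy2⟩ := h2.exists
    exact ⟨y, hy2, hy1⟩
  have hb : BddBelow S := ⟨x, fun y hy => hy.1⟩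
  have hm := hc.csInf_mem hne hb
  refine ⟨sInf S, lt_of_le_of_ne hm.1 ?_, hm.2, ?_⟩
  · intro h
    have := hm.2
    rw [← h] at this
    linarith
  · intro z hz
    by_contra hcon
    have : z ∈ S := ⟨hz.1.le, (not_le.mp hcon).le⟩
    exact absurd (csInf_le hb this) (not_le.mpr hz.2)

lemma main_step (W : ℝ → ℝ) (hW : ∀ s, 0 ≤ W s) (g : ℝ → ℝ) (hg : ContDiff ℝ 1 g)
    (hi : Integrable (fun x => (g x) ^ 2))
    (ht : Tendsto g atTop (nhds 0)) (hQ : Integrable (fun x => W (deriv g x)))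
    (x : ℝ) (hx : 0 < |g x|) :
    0 < (∫ x, (g x) ^ 2) ∧ ∀ k, 0 < k →
      (∀ s, k * |s| ≤ k * (|g x| ^ 3 / (16 * ∫ x, (g x) ^ 2)) + W s) →
      k * |g x| ≤ 4 * ∫ x, W (deriv g x) := by
  obtain ⟨y, hxy, hy, hz⟩ := exists_interval g hg.continuous ht x hx
  set m := |g x| with hm
  set I := ∫ x, (g x) ^ 2 with hI
  have hdc : Continuous (deriv g) := hg.continuous_deriv le_rfl
  have hL : m ^ 2 / 4 * (y - x) ≤ I := by
    have h1 : ∫ z in x..y, m ^ 2 / 4 ≤ ∫ z in x..y, (g z) ^ 2 := by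
      refine intervalIntegral.integral_mono_on_of_le_Ioo hxy.le (by simp)
        (hi.intervalIntegrable) ?_
      intro z hzz
      have := hz z hzz
      rw [← sq_abs (g z)]
      nlinarith
    have h2 : ∫ z in x..y, (g z) ^ 2 ≤ I := by
      rw [intervalIntegral.integral_of_le hxy.le]
      exact setIntegral_le_integral hi (Eventually.of_forall fun z => sq_nonneg _)
    simp only [intervalIntegral.integral_const, smul_eq_mul] at h1
    linarith
  have hIpos : 0 < I := by
    have : 0 < m ^ 2 / 4 * (y - x) := mul_pos (by positivity) (by linarith)
    linarith
  refine ⟨hIpos, fun k hk hyoung => ?_⟩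
  have hft : m / 2 ≤ ∫ z in x..y, |deriv g z| := by
    have h1 : ∫ z in x..y, deriv g z = g y - g x :=
      intervalIntegral.integral_deriv_eq_sub
        (fun z _ => (hg.differentiable (by norm_num)).differentiableAt)
        (hdc.intervalIntegrable _ _)
    have h2 := intervalIntegral.abs_integral_le_integral_abs (f := deriv g) (μ := volume) hxy.le
    rw [h1] at h2
    have h3 := abs_sub_abs_le_abs_sub (g x) (g y)
    rw [abs_sub_comm] at h3
    linarith
  have hint : ∫ z in x..y, k * |deriv g z| ≤
      ∫ z in x..y, (k * (m ^ 3 / (16 * I)) + W (deriv g z)) := by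
    refine intervalIntegral.integral_mono_on hxy.le
      ((continuous_const.mul hdc.abs).intervalIntegrable _ _)
      ((intervalIntegrable_const).add hQ.intervalIntegrable) ?_
    intro z _
    exact hyoung _
  rw [intervalIntegral.integral_const_mul, intervalIntegral.integral_add intervalIntegrable_const
    hQ.intervalIntegrable] at hint
  simp only [intervalIntegral.integral_const, smul_eq_mul] at hint
  have h2 : ∫ z in x..y, W (deriv g z) ≤ ∫ x, W (deriv g x) := by
    rw [intervalIntegral.integral_of_le hxy.le]
    exact setIntegral_le_integral hQ (Eventually.of_forall fun z => hW _)
  have h3 : (y - x) * (m ^ 3 / (16 * I)) ≤ m / 4 := by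
    rw [← mul_div_assoc, div_le_iff₀ (by positivity)]
    nlinarith
  have h4 : k * (m / 2) ≤ k * ∫ z in x..y, |deriv g z| := by gcongr
  have h5 : k * ((y - x) * (m ^ 3 / (16 * I))) ≤ k * (m / 4) := by gcongr
  linarith

/-- Sobolev-type inequality (Lemma 4.2): for `0 < p < 1` there is `C > 0` depending only
on `p` such that for every `C¹`, square-integrable `g : ℝ → ℝ` vanishing at `±∞` with
finite weighted Dirichlet energy `Q = ∫ (1+g'²)^((p-1)/2) g'²`, one has
`(sup |g|)² ≤ C Q^(1/2) ‖g‖_{L²} + C Q^(2/(3p+1)) ‖g‖_{L²}^(4p/(3p+1))`. -/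
theorem sobolev_type_inequality (p : ℝ) (hp0 : 0 < p) (hp1 : p < 1) :
    ∃ C : ℝ, 0 < C ∧
      ∀ g : ℝ → ℝ, ContDiff ℝ 1 g →
        Integrable (fun x => (g x) ^ 2) →
        Tendsto g atTop (nhds 0) → Tendsto g atBot (nhds 0) →
        Integrable (fun x => (1 + (deriv g x) ^ 2) ^ ((p - 1) / 2) * (deriv g x) ^ 2) →
        (⨆ x, |g x|) ^ 2 ≤
          C * (∫ x, (1 + (deriv g x) ^ 2) ^ ((p - 1) / 2) * (deriv g x) ^ 2) ^ ((1 : ℝ) / 2)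
              * ((∫ x, (g x) ^ 2) ^ ((1 : ℝ) / 2))
          + C * (∫ x, (1 + (deriv g x) ^ 2) ^ ((p - 1) / 2) * (deriv g x) ^ 2) ^ (2 / (3 * p + 1))
              * ((∫ x, (g x) ^ 2) ^ ((1 : ℝ) / 2)) ^ (4 * p / (3 * p + 1)) := by
  refine ⟨128 ^ 2, by norm_num, ?_⟩
  intro g hg hi ht _ hQ
  have key := main_step (fun s => (1 + s ^ 2) ^ ((p - 1) / 2) * s ^ 2)
    (fun s => by positivity) g hg hi ht hQ
  have hQ0 : 0 ≤ ∫ x, (1 + (deriv g x) ^ 2) ^ ((p - 1) / 2) * (deriv g x) ^ 2 :=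
    integral_nonneg fun x => by positivity
  have hI0 : 0 ≤ ∫ x, (g x) ^ 2 := integral_nonneg fun x => by positivity
  set Q := ∫ x, (1 + (deriv g x) ^ 2) ^ ((p - 1) / 2) * (deriv g x) ^ 2
  set I := ∫ x, (g x) ^ 2
  set A := 128 ^ 2 * Q ^ ((1 : ℝ) / 2) * I ^ ((1 : ℝ) / 2) with hA
  set B := 128 ^ 2 * Q ^ (2 / (3 * p + 1)) * (I ^ ((1 : ℝ) / 2)) ^ (4 * p / (3 * p + 1)) with hB
  have hA0 : 0 ≤ A := by positivity
  have hB0 : 0 ≤ B := by positivity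
  have hpt : ∀ x, |g x| ^ 2 ≤ A + B := by
    intro x
    rcases (abs_nonneg (g x)).eq_or_lt with h0 | h0
    · rw [← h0]; simp; positivity
    obtain ⟨hI, hk⟩ := key x h0
    set m := |g x| with hm
    set e := m ^ 3 / (16 * I) with he
    have hepos : 0 < e := by positivity
    rcases le_total e 1 with h1 | h1
    · have h2 := hk (e / 2) (by positivity) (young_small p hp0 hp1 e hepos h1)
      have h3 : m ^ 4 ≤ 128 * (Q * I) := by
        have h4 : e / 2 * m = m ^ 4 / (32 * I) := by rw [he]; field_simp; ring
        rw [h4, div_le_iff₀ (by positivity)] at h2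
        linarith
      have h5 : m ^ 2 ≤ A := by
        refine (pow_le_pow_iff_left₀ (by positivity) hA0 (two_ne_zero)).mp ?_
        have : A ^ 2 = 128 ^ 4 * (Q * I) := by
          rw [hA, ← Real.sqrt_eq_rpow, ← Real.sqrt_eq_rpow]
          rw [mul_pow, mul_pow, Real.sq_sqrt hQ0, Real.sq_sqrt hI0]; ring
        rw [this]
        have : 0 ≤ Q * I := by positivity
        nlinarith
      linarith
    · have h2 := hk (e ^ p / 2) (by positivity) (young_large p hp0 hp1 e h1)
      have hd : 0 < 3 * p + 1 := by linarith
      have h3 : m ^ (3 * p + 1) ≤ 128 * Q * I ^ p := by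
        have h4 : e ^ p = m ^ (3 * p) / (16 ^ p * I ^ p) := by
          rw [he, Real.div_rpow (by positivity) (by positivity),
            Real.mul_rpow (by norm_num) hI0, Real.rpow_mul h0.le]
          norm_num
        have h5 : (16 : ℝ) ^ p ≤ 16 := by
          have := Real.rpow_le_rpow_of_exponent_le (x := 16) (by norm_num) hp1.le
          simpa using this
        have h6 : m ^ (3 * p + 1) = e ^ p / 2 * m * 2 * (16 ^ p * I ^ p) := by
          rw [h4, Real.rpow_add_one h0.ne']
          have : 0 < I ^ p := by positivity
          field_simp
        rw [h6]
        calc e ^ p / 2 * m * 2 * (16 ^ p * I ^ p) ≤ 4 * Q * 2 * (16 * I ^ p) := by gcongr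
          _ = _ := by ring
      have h7 : m ^ 2 ≤ B := by
        have h8 := Real.rpow_le_rpow (by positivity) h3
          (show 0 ≤ 2 / (3 * p + 1) by positivity)
        rw [← Real.rpow_mul h0.le, mul_div_cancel₀ _ hd.ne', Real.rpow_two,
          Real.mul_rpow (by positivity) (by positivity), Real.mul_rpow (by norm_num) hQ0,
          ← Real.rpow_mul hI0] at h8
        rw [hB, ← Real.rpow_mul hI0,
          show (1 : ℝ) / 2 * (4 * p / (3 * p + 1)) = p * (2 / (3 * p + 1)) by ring]
        refine h8.trans ?_
        have h9 : (128 : ℝ) ^ (2 / (3 * p + 1)) ≤ 128 ^ 2 := by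
          rw [← Real.rpow_two]
          apply Real.rpow_le_rpow_of_exponent_le (by norm_num)
          rw [div_le_iff₀ hd]; linarith
        gcongr
      linarith
  have hs : (⨆ x, |g x|) ≤ √(A + B) :=
    ciSup_le fun x => Real.le_sqrt_of_sq_le (hpt x)
  calc (⨆ x, |g x|) ^ 2 ≤ √(A + B) ^ 2 := by
        have : 0 ≤ ⨆ x, |g x| := Real.iSup_nonneg fun x => abs_nonneg _
        gcongr
    _ = A + B := Real.sq_sqrt (by positivity)
end

section
/- Let 0 < p < 1 and let v : ℝ → ℝ be continuously differentiable with v(x) → 0 as x → −∞. Then for every x ∈ ℝ, (1+v(x)²)^{(3p+1)/4} ≤ 1 + ((3p+1)/2) · ( ∫_ℝ (1+v(y)²)^{(p-1)/2} v(y)² dy )^{1/2} · ( ∫_ℝ (1+v(y)²)^{p-1} v'(y)² dy )^{1/2}. -/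
open MeasureTheory Filter

/-- Kanel'-type pointwise estimate ((6.23)–(6.24) with `a = (3p+1)/2`): for `0 < p < 1`
and `v` a `C¹` function vanishing at `-∞`, for every `x`,
`(1+v(x)²)^((3p+1)/4) ≤ 1 + ((3p+1)/2) (∫ (1+v²)^((p-1)/2) v²)^(1/2) (∫ (1+v²)^(p-1) v'²)^(1/2)`,
stated with (possibly infinite) lower Lebesgue integrals. -/
theorem kanel_pointwise_estimate (p : ℝ) (hp0 : 0 < p) (hp1 : p < 1)
    (v : ℝ → ℝ) (hv : ContDiff ℝ 1 v) (hlim : Tendsto v atBot (nhds 0)) (x : ℝ) :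
    ENNReal.ofReal ((1 + (v x) ^ 2) ^ ((3 * p + 1) / 4)) ≤
      1 + ENNReal.ofReal ((3 * p + 1) / 2) *
        (∫⁻ y, ENNReal.ofReal ((1 + (v y) ^ 2) ^ ((p - 1) / 2) * (v y) ^ 2)) ^ ((1 : ℝ) / 2) *
        (∫⁻ y, ENNReal.ofReal ((1 + (v y) ^ 2) ^ (p - 1) * (deriv v y) ^ 2)) ^ ((1 : ℝ) / 2) := by
  set b : ℝ := (3 * p + 1) / 4 with hb
  have hpos : ∀ y, 0 < 1 + (v y) ^ 2 := fun y => by positivity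
  have hvd : ∀ y, HasDerivAt v (deriv v y) y := fun y =>
    (hv.differentiable (by norm_num)).differentiableAt.hasDerivAt
  have hvc : Continuous v := hv.continuous
  have hdc : Continuous (deriv v) := hv.continuous_deriv (le_refl _)
  have hrc : ∀ r : ℝ, Continuous (fun y => (1 + (v y) ^ 2) ^ r) := fun r =>
    Continuous.rpow_const (by fun_prop) (fun y => Or.inl (hpos y).ne')
  have hder : ∀ y, HasDerivAt (fun y => (1 + (v y) ^ 2) ^ b)
      (2 * v y * deriv v y * b * (1 + (v y) ^ 2) ^ (b - 1)) y := by
    intro y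
    have h1 : HasDerivAt (fun y => 1 + (v y) ^ 2) (2 * v y * deriv v y) y := by
      simpa using ((hvd y).pow 2).const_add 1
    exact h1.rpow_const (Or.inl (hpos y).ne')
  have hfc : Continuous (fun y => 2 * v y * deriv v y * b * (1 + (v y) ^ 2) ^ (b - 1)) := by
    have := hrc (b - 1)
    fun_prop
  let A : ℝ → ℝ := fun y => (1 + (v y) ^ 2) ^ ((p - 1) / 4) * |v y|
  let B : ℝ → ℝ := fun y => (1 + (v y) ^ 2) ^ ((p - 1) / 2) * |deriv v y|
  have hAc : Continuous A := (hrc _).mul hvc.abs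
  have hBc : Continuous B := (hrc _).mul hdc.abs
  have hA0 : ∀ y, 0 ≤ A y := fun y => mul_nonneg (Real.rpow_nonneg (hpos y).le _) (abs_nonneg _)
  have hB0 : ∀ y, 0 ≤ B y := fun y => mul_nonneg (Real.rpow_nonneg (hpos y).le _) (abs_nonneg _)
  have hA2 : ∀ y, ENNReal.ofReal (A y) ^ (2 : ℝ) =
      ENNReal.ofReal ((1 + (v y) ^ 2) ^ ((p - 1) / 2) * (v y) ^ 2) := by
    intro y
    rw [ENNReal.ofReal_rpow_of_nonneg (hA0 y) (by norm_num), Real.rpow_two]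
    simp only [A]
    rw [mul_pow, sq_abs, ← Real.rpow_mul_natCast (hpos y).le]
    congr 3
    push_cast
    ring
  have hB2 : ∀ y, ENNReal.ofReal (B y) ^ (2 : ℝ) =
      ENNReal.ofReal ((1 + (v y) ^ 2) ^ (p - 1) * (deriv v y) ^ 2) := by
    intro y
    rw [ENNReal.ofReal_rpow_of_nonneg (hB0 y) (by norm_num), Real.rpow_two]
    simp only [B]
    rw [mul_pow, sq_abs, ← Real.rpow_mul_natCast (hpos y).le]
    congr 3
    push_cast
    ring
  have hc0 : 0 ≤ (3 * p + 1) / 2 := by linarith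
  have hnorm : ∀ y, ‖2 * v y * deriv v y * b * (1 + (v y) ^ 2) ^ (b - 1)‖ₑ =
      ENNReal.ofReal ((3 * p + 1) / 2) * (ENNReal.ofReal (A y) * ENNReal.ofReal (B y)) := by
    intro y
    rw [← ENNReal.ofReal_mul (hA0 y), ← ENNReal.ofReal_mul hc0, Real.enorm_eq_ofReal_abs]
    congr 1
    have hb0 : 0 ≤ b := by rw [hb]; linarith
    simp only [A, B, abs_mul]
    rw [abs_of_nonneg hb0, abs_of_nonneg (Real.rpow_nonneg (hpos y).le _),
      show b - 1 = (p - 1) / 4 + (p - 1) / 2 by rw [hb]; ring, Real.rpow_add (hpos y), hb, abs_two]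
    ring
  have hH := ENNReal.lintegral_mul_le_Lp_mul_Lq (volume : Measure ℝ) Real.HolderConjugate.two_two
    (f := fun y => ENNReal.ofReal (A y)) (g := fun y => ENNReal.ofReal (B y))
    hAc.measurable.ennreal_ofReal.aemeasurable hBc.measurable.ennreal_ofReal.aemeasurable
  simp only [hA2, hB2, Pi.mul_apply] at hH
  have hkey : ∀ N ≤ x, ENNReal.ofReal ((1 + (v x) ^ 2) ^ b) ≤ ENNReal.ofReal ((1 + (v N) ^ 2) ^ b) +
      ENNReal.ofReal ((3 * p + 1) / 2) *
        ∫⁻ y, ENNReal.ofReal (A y) * ENNReal.ofReal (B y) := by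
    intro N hN
    have hF := intervalIntegral.integral_eq_sub_of_hasDerivAt (a := N) (b := x)
      (fun y _ => hder y) (hfc.intervalIntegrable _ _)
    rw [intervalIntegral.integral_of_le hN] at hF
    have h1 := enorm_integral_le_lintegral_enorm (μ := volume.restrict (Set.Ioc N x))
      (fun y => 2 * v y * deriv v y * b * (1 + (v y) ^ 2) ^ (b - 1))
    rw [hF] at h1
    have h2 : (∫⁻ y in Set.Ioc N x, ‖2 * v y * deriv v y * b * (1 + (v y) ^ 2) ^ (b - 1)‖ₑ) ≤
        ENNReal.ofReal ((3 * p + 1) / 2) *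
        ∫⁻ y, ENNReal.ofReal (A y) * ENNReal.ofReal (B y) := by
      refine (setLIntegral_le_lintegral _ _).trans ?_
      simp only [hnorm]
      rw [lintegral_const_mul' _ _ ENNReal.ofReal_ne_top]
    have h3 := Real.ofReal_le_enorm ((1 + (v x) ^ 2) ^ b - (1 + (v N) ^ 2) ^ b)
    calc ENNReal.ofReal ((1 + (v x) ^ 2) ^ b)
        = ENNReal.ofReal ((1 + (v N) ^ 2) ^ b + ((1 + (v x) ^ 2) ^ b - (1 + (v N) ^ 2) ^ b)) := by
          congr 1; ring
      _ ≤ _ := ENNReal.ofReal_add_le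
      _ ≤ _ := add_le_add le_rfl (h3.trans (h1.trans h2))
  have hlim2 : Tendsto (fun N => ENNReal.ofReal ((1 + (v N) ^ 2) ^ b)) atBot (nhds 1) := by
    have h1 : Tendsto (fun N => (1 + (v N) ^ 2) ^ b) atBot (nhds ((1 + (0:ℝ) ^ 2) ^ b)) :=
      ((hlim.pow 2).const_add 1).rpow_const (Or.inl (by norm_num))
    simpa using ENNReal.tendsto_ofReal h1
  have hfin := ge_of_tendsto (hlim2.add_const (ENNReal.ofReal ((3 * p + 1) / 2) *
        ∫⁻ y, ENNReal.ofReal (A y) * ENNReal.ofReal (B y)))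
    ((eventually_le_atBot x).mono hkey)
  refine hfin.trans (add_le_add le_rfl ?_)
  rw [mul_assoc]
  exact mul_le_mul_right hH _
end

section
/- Let w₀ : ℝ → ℝ be infinitely differentiable with w₀'(x) > 0 for all x and with finite limits w₋ := lim_{x→−∞} w₀(x) and w₊ := lim_{x→+∞} w₀(x). For t ≥ 0 let Y(t,·) : ℝ → ℝ be the inverse of the bijection X_t(x₀) := x₀ + t·w₀(x₀), and define w(t,x) := w₀(Y(t,x)). Then w is continuous on [0,∞)×ℝ, continuously differentiable on (0,∞)×ℝ, w(0,x) = w₀(x) for all x, and ∂ₜw(t,x) + w(t,x)·∂ₓw(t,x) = 0 for all t > 0 and x ∈ ℝ. -/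
open Filter Set

/-- Method of characteristics for the non-viscous Burgers equation: with smooth increasing
initial data `w₀` having finite limits at `±∞`, `Y t` the inverse of the characteristic map
`x₀ ↦ x₀ + t·w₀(x₀)` for `t ≥ 0`, and `w(t,x) := w₀(Y(t,x))`, the function `w` is continuous
on `[0,∞)×ℝ`, continuously differentiable on `(0,∞)×ℝ`, satisfies `w(0,·) = w₀`, and solves
`∂ₜw + w·∂ₓw = 0` for `t > 0`. -/
theorem burgers_characteristics_solution (w₀ : ℝ → ℝ) (hw : ContDiff ℝ (⊤ : ℕ∞) w₀)
    (hpos : ∀ x, 0 < deriv w₀ x) (wm wp : ℝ)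
    (hminus : Tendsto w₀ atBot (nhds wm)) (hplus : Tendsto w₀ atTop (nhds wp))
    (Y : ℝ → ℝ → ℝ) (hY : ∀ t : ℝ, 0 ≤ t → ∀ x, Y t x + t * w₀ (Y t x) = x)
    (w : ℝ → ℝ → ℝ) (hwdef : ∀ t x, w t x = w₀ (Y t x)) :
    ContinuousOn (fun q : ℝ × ℝ => w q.1 q.2) (Ici 0 ×ˢ univ) ∧
    ContDiffOn ℝ 1 (fun q : ℝ × ℝ => w q.1 q.2) (Ioi 0 ×ˢ univ) ∧
    (∀ x, w 0 x = w₀ x) ∧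
    (∀ t : ℝ, 0 < t → ∀ x,
      deriv (fun s => w s x) t + w t x * deriv (fun y => w t y) x = 0) := by
  have hd : Differentiable ℝ w₀ := hw.differentiable (by simp)
  have hmono : StrictMono w₀ := strictMono_of_deriv_pos hpos
  -- the characteristic map is expanding
  have hexp : ∀ t : ℝ, 0 ≤ t → ∀ a b : ℝ,
      |a - b| ≤ |(a + t * w₀ a) - (b + t * w₀ b)| := by
    intro t ht a b
    rcases le_total a b with h | h
    · have h1 := mul_le_mul_of_nonneg_left (hmono.monotone h) ht
      rw [abs_of_nonpos (by linarith), abs_of_nonpos (by linarith)]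
      linarith
    · have h1 := mul_le_mul_of_nonneg_left (hmono.monotone h) ht
      rw [abs_of_nonneg (by linarith), abs_of_nonneg (by linarith)]
      linarith
  have hinv : ∀ t : ℝ, 0 ≤ t → ∀ y, Y t (y + t * w₀ y) = y := by
    intro t ht y
    have h := hexp t ht (Y t (y + t * w₀ y)) y
    rw [hY t ht, sub_self, abs_zero] at h
    exact sub_eq_zero.1 (abs_nonpos_iff.1 h)
  have hYc : ContinuousOn (fun q : ℝ × ℝ => Y q.1 q.2) (Ici 0 ×ˢ univ) := by
    rintro ⟨t, x⟩ ⟨ht, -⟩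
    have ht' : 0 ≤ t := ht
    unfold ContinuousWithinAt
    rw [tendsto_iff_dist_tendsto_zero]
    have hc : Continuous (fun q : ℝ × ℝ => |q.2 - (Y t x + q.1 * w₀ (Y t x))|) := by fun_prop
    have hlim := (hc.tendsto (t, x)).mono_left (nhdsWithin_le_nhds (s := Ici 0 ×ˢ univ))
    simp only [hY t ht', sub_self, abs_zero] at hlim
    refine squeeze_zero' (Eventually.of_forall fun _ => dist_nonneg) ?_ hlim
    filter_upwards [self_mem_nhdsWithin] with q hq
    have h := hexp q.1 hq.1 (Y q.1 q.2) (Y t x)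
    rw [hY q.1 hq.1] at h
    rw [Real.dist_eq]
    exact h
  have hopen : IsOpen (Ioi (0 : ℝ) ×ˢ (univ : Set ℝ)) := isOpen_Ioi.prod isOpen_univ
  have hΦ : ContDiff ℝ 1 (fun q : ℝ × ℝ => (q.1, q.2 + q.1 * w₀ q.2)) := by
    have h1 : ContDiff ℝ 1 w₀ := hw.of_le (by exact_mod_cast le_top)
    fun_prop
  let e : OpenPartialHomeomorph (ℝ × ℝ) (ℝ × ℝ) :=
    { toFun := fun q => (q.1, q.2 + q.1 * w₀ q.2)
      invFun := fun q => (q.1, Y q.1 q.2)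
      source := Ioi 0 ×ˢ univ
      target := Ioi 0 ×ˢ univ
      map_source' := fun q hq => ⟨hq.1, trivial⟩
      map_target' := fun q hq => ⟨hq.1, trivial⟩
      left_inv' := fun q hq => Prod.ext rfl (hinv q.1 (le_of_lt hq.1) q.2)
      right_inv' := fun q hq => Prod.ext rfl (hY q.1 (le_of_lt hq.1) q.2)
      open_source := hopen
      open_target := hopen
      continuousOn_toFun := hΦ.continuous.continuousOn
      continuousOn_invFun := continuousOn_fst.prodMk
        (hYc.mono (prod_mono Ioi_subset_Ici_self subset_rfl)) }
  have hYd : ∀ q : ℝ × ℝ, 0 < q.1 → ContDiffAt ℝ 1 (fun q : ℝ × ℝ => Y q.1 q.2) q := by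
    rintro ⟨t, x⟩ ht
    have ht' : 0 < t := ht
    set y := Y t x with hy
    have hne : 1 + t * deriv w₀ y ≠ 0 := by
      have := mul_pos ht' (hpos y)
      linarith
    let A : (ℝ × ℝ) →L[ℝ] (ℝ × ℝ) := (ContinuousLinearMap.fst ℝ ℝ ℝ).prod
      (w₀ y • ContinuousLinearMap.fst ℝ ℝ ℝ
        + (1 + t * deriv w₀ y) • ContinuousLinearMap.snd ℝ ℝ ℝ)
    let B : (ℝ × ℝ) →L[ℝ] (ℝ × ℝ) := (ContinuousLinearMap.fst ℝ ℝ ℝ).prod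
      ((1 + t * deriv w₀ y)⁻¹ • (ContinuousLinearMap.snd ℝ ℝ ℝ
        - w₀ y • ContinuousLinearMap.fst ℝ ℝ ℝ))
    let E : (ℝ × ℝ) ≃L[ℝ] (ℝ × ℝ) := ContinuousLinearEquiv.equivOfInverse A B
      (by
        rintro ⟨a, b⟩
        simp only [A, B, ContinuousLinearMap.prod_apply, add_apply,
          sub_apply, smul_apply,
          ContinuousLinearMap.coe_fst', ContinuousLinearMap.coe_snd', smul_eq_mul]
        refine Prod.ext rfl ?_
        simp only
        field_simp
        ring)
      (by
        rintro ⟨a, b⟩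
        simp only [A, B, ContinuousLinearMap.prod_apply, add_apply,
          sub_apply, smul_apply,
          ContinuousLinearMap.coe_fst', ContinuousLinearMap.coe_snd', smul_eq_mul]
        refine Prod.ext rfl ?_
        simp only
        field_simp
        ring)
    have hder : HasFDerivAt (fun q : ℝ × ℝ => (q.1, q.2 + q.1 * w₀ q.2)) A (t, y) := by
      have h1 : HasFDerivAt (fun q : ℝ × ℝ => q.1) (ContinuousLinearMap.fst ℝ ℝ ℝ) (t, y) :=
        hasFDerivAt_fst
      have h2 : HasFDerivAt (fun q : ℝ × ℝ => q.2) (ContinuousLinearMap.snd ℝ ℝ ℝ) (t, y) :=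
        hasFDerivAt_snd
      have h3 : HasFDerivAt (fun q : ℝ × ℝ => w₀ q.2)
          (deriv w₀ y • ContinuousLinearMap.snd ℝ ℝ ℝ) (t, y) :=
        (hd y).hasDerivAt.comp_hasFDerivAt (t, y) h2
      refine (h1.prodMk (h2.add (h1.mul h3))).congr_fderiv ?_
      ext <;> simp [A]
    have hs : ContDiffAt ℝ 1 e.symm (t, x) :=
      e.contDiffAt_symm (f₀' := E) ⟨ht, trivial⟩ hder hΦ.contDiffAt
    exact hs.snd
  have hWd : ∀ q : ℝ × ℝ, 0 < q.1 → ContDiffAt ℝ 1 (fun q : ℝ × ℝ => w q.1 q.2) q := by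
    intro q hq
    simp only [hwdef]
    have h1 : ContDiff ℝ 1 w₀ := hw.of_le (by exact_mod_cast le_top)
    exact h1.contDiffAt.comp q (hYd q hq)
  refine ⟨?_, fun q hq => (hWd q hq.1).contDiffWithinAt, ?_, ?_⟩
  · simp only [hwdef]
    exact hd.continuous.comp_continuousOn hYc
  · intro x
    have h := hY 0 le_rfl x
    rw [zero_mul, add_zero] at h
    rw [hwdef, h]
  · intro t ht x
    have hD := ((hWd (t, x) ht).differentiableAt (by simp)).hasFDerivAt
    set D := fderiv ℝ (fun q : ℝ × ℝ => w q.1 q.2) (t, x)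
    have e1 : HasDerivAt (fun s => w s x) (D (1, 0)) t :=
      HasFDerivAt.comp_hasDerivAt (f := fun s : ℝ => (s, x)) t hD
        ((hasDerivAt_id t).prodMk (hasDerivAt_const t x))
    have e2 : HasDerivAt (fun y => w t y) (D (0, 1)) x :=
      HasFDerivAt.comp_hasDerivAt (f := fun s : ℝ => (t, s)) x hD
        ((hasDerivAt_const x t).prodMk (hasDerivAt_id x))
    -- `w` is constant along characteristics
    have hcurve : HasDerivAt (fun s : ℝ => (s, Y t x + s * w₀ (Y t x))) (1, w₀ (Y t x)) t := by
      have h := ((hasDerivAt_id t).mul_const (w₀ (Y t x))).const_add (Y t x)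
      rw [one_mul] at h
      exact (hasDerivAt_id t).prodMk h
    have e3 : HasDerivAt (fun s : ℝ => w s (Y t x + s * w₀ (Y t x))) (D (1, w₀ (Y t x))) t := by
      refine HasFDerivAt.comp_hasDerivAt (l := fun q : ℝ × ℝ => w q.1 q.2) (l' := D)
        (f := fun s : ℝ => (s, Y t x + s * w₀ (Y t x))) t ?_ hcurve
      rw [hY t ht.le x]
      exact hD
    have e4 : HasDerivAt (fun s : ℝ => w s (Y t x + s * w₀ (Y t x))) 0 t := by
      refine (hasDerivAt_const t (w₀ (Y t x))).congr_of_eventuallyEq ?_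
      filter_upwards [lt_mem_nhds ht] with s hs
      rw [hwdef, hinv s hs.le]
    have e5 := e3.unique e4
    rw [e1.deriv, e2.deriv, hwdef]
    have h6 : ((1 : ℝ), w₀ (Y t x)) = (1, 0) + w₀ (Y t x) • ((0 : ℝ), (1 : ℝ)) := by simp
    rw [h6, map_add, map_smul, smul_eq_mul] at e5
    exact e5
end

section
/- Let w₀ : ℝ → ℝ be continuously differentiable with 0 < w₀'(x) ≤ K for all x (for a constant K > 0) and with finite limits at ±∞. For t ≥ 0 let Y(t,·) be the inverse of X_t(x₀) := x₀ + t·w₀(x₀) and let w(t,x) := w₀(Y(t,x)). Then for all t ≥ 0 and x ∈ ℝ, 0 < ∂ₓw(t,x) ≤ K/(1 + K·t); in particular sup_{x∈ℝ} ∂ₓw(t,x) ≤ max(K,1) · (1+t)^{-1}. -/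
open Filter

/-- L^∞ decay of the derivative (Lemma 2.1(2), case `r = ∞`): if `0 < w₀' ≤ K` and `w₀`
has finite limits at `±∞`, then the Burgers solution `w(t,x) = w₀(Y(t,x))` satisfies
`0 < ∂ₓw(t,x) ≤ K/(1+Kt)`, hence `∂ₓw(t,x) ≤ max(K,1)·(1+t)⁻¹`, for all `t ≥ 0`, `x`. -/
theorem burgers_derivative_decay_Linfty (K : ℝ) (hK : 0 < K)
    (w₀ : ℝ → ℝ) (hw : ContDiff ℝ 1 w₀)
    (hpos : ∀ x, 0 < deriv w₀ x) (hbd : ∀ x, deriv w₀ x ≤ K)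
    (wm wp : ℝ)
    (hminus : Tendsto w₀ atBot (nhds wm)) (hplus : Tendsto w₀ atTop (nhds wp))
    (Y : ℝ → ℝ → ℝ) (hY : ∀ t : ℝ, 0 ≤ t → ∀ x, Y t x + t * w₀ (Y t x) = x)
    (w : ℝ → ℝ → ℝ) (hwdef : ∀ t x, w t x = w₀ (Y t x)) :
    ∀ t : ℝ, 0 ≤ t → ∀ x : ℝ,
      (0 < deriv (fun y => w t y) x ∧ deriv (fun y => w t y) x ≤ K / (1 + K * t)) ∧
      deriv (fun y => w t y) x ≤ max K 1 * (1 + t)⁻¹ := by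
  intro t ht x
  have hmono : StrictMono w₀ := strictMono_of_deriv_pos hpos
  have hle : ∀ a b, a ≤ b → Y t a ≤ Y t b ∧ Y t b - Y t a ≤ b - a := by
    intro a b hab
    have ha := hY t ht a
    have hb := hY t ht b
    have h1 : Y t a ≤ Y t b := by
      by_contra hc
      push Not at hc
      have := mul_le_mul_of_nonneg_left (hmono hc).le ht
      linarith
    have := mul_le_mul_of_nonneg_left (hmono.monotone h1) ht
    exact ⟨h1, by linarith⟩
  have hlip : LipschitzWith 1 (Y t) := by
    refine LipschitzWith.of_dist_le_mul fun a b => ?_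
    rw [Real.dist_eq, Real.dist_eq, NNReal.coe_one, one_mul]
    rcases le_total a b with h | h
    · obtain ⟨h1, h2⟩ := hle a b h
      rw [abs_sub_comm, abs_sub_comm a b, abs_of_nonneg (by linarith),
        abs_of_nonneg (by linarith)]
      exact h2
    · obtain ⟨h1, h2⟩ := hle b a h
      rw [abs_of_nonneg (by linarith), abs_of_nonneg (by linarith)]
      exact h2
  set d := deriv w₀ (Y t x) with hd
  have hd0 : 0 < d := hpos _
  have hdK : d ≤ K := hbd _
  have htd : 0 ≤ t * d := mul_nonneg ht hd0.le
  have hKt : 0 ≤ K * t := mul_nonneg hK.le ht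
  have hwd : HasDerivAt w₀ d (Y t x) :=
    ((hw.differentiable (by norm_num)) (Y t x)).hasDerivAt
  have hX : HasDerivAt (fun y => y + t * w₀ y) (1 + t * d) (Y t x) :=
    (hasDerivAt_id' _).add (hwd.const_mul t)
  have hYd : HasDerivAt (Y t) (1 + t * d)⁻¹ x :=
    HasDerivAt.of_local_left_inverse hlip.continuous.continuousAt hX (by positivity)
      (Eventually.of_forall fun y => hY t ht y)
  have hder : deriv (fun y => w t y) x = d / (1 + t * d) := by
    have he : (fun y => w t y) = w₀ ∘ Y t := by
      funext y
      exact hwdef t y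
    rw [he, div_eq_mul_inv]
    exact (hwd.comp x hYd).deriv
  rw [hder]
  have h1 : d / (1 + t * d) ≤ K / (1 + K * t) := by
    rw [div_le_div_iff₀ (by positivity) (by positivity)]
    nlinarith
  refine ⟨⟨by positivity, h1⟩, h1.trans ?_⟩
  rw [← div_eq_mul_inv, div_le_div_iff₀ (by positivity) (by positivity)]
  have hM1 : K ≤ max K 1 := le_max_left _ _
  have hM2 : 1 ≤ max K 1 := le_max_right _ _
  nlinarith [mul_le_mul_of_nonneg_right hM2 hKt]
end

section
/- Let w₀ : ℝ → ℝ be continuously differentiable with 0 < w₀'(x) ≤ K for all x (for a constant K > 0) and with finite limits w₋ := lim_{x→−∞} w₀(x), w₊ := lim_{x→+∞} w₀(x). For t ≥ 0 let Y(t,·) be the inverse of X_t(x₀) := x₀ + t·w₀(x₀) and let w(t,x) := w₀(Y(t,x)). Then for every real r ≥ 1 and every t ≥ 0, ∫_ℝ (∂ₓw(t,x))^r dx ≤ (w₊ − w₋) · ( K/(1 + K·t) )^{r−1}; in particular ‖∂ₓw(t)‖_{L^r} ≤ C_r (1+t)^{−1+1/r} with C_r depending only on K, w₊ − w₋ and r.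 -/
open Filter MeasureTheory

lemma burgers_aux (K : ℝ) (hK : 0 < K)
    (w₀ : ℝ → ℝ) (hw : ContDiff ℝ 1 w₀)
    (hpos : ∀ x, 0 < deriv w₀ x) (hbd : ∀ x, deriv w₀ x ≤ K)
    (wm wp : ℝ)
    (hminus : Tendsto w₀ atBot (nhds wm)) (hplus : Tendsto w₀ atTop (nhds wp))
    (t : ℝ) (ht : 0 ≤ t)
    (Y : ℝ → ℝ) (hY : ∀ x, Y x + t * w₀ (Y x) = x) :
    ∃ g : ℝ → ℝ, (∀ x, HasDerivAt (fun y => w₀ (Y y)) (g x) x) ∧ (∀ x, 0 ≤ g x) ∧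
      (∀ x, g x ≤ K / (1 + K * t)) ∧ Integrable g ∧ ∫ x, g x = wp - wm := by
  have hmono : StrictMono w₀ := strictMono_of_deriv_pos hpos
  have hX : StrictMono (fun a => a + t * w₀ a) := fun a b hab => by
    have := mul_le_mul_of_nonneg_left (hmono hab).le ht
    show a + t * w₀ a < b + t * w₀ b
    linarith
  have hYX : ∀ a, Y (a + t * w₀ a) = a := fun a => hX.injective (hY _)
  have hYm : Monotone Y := fun x y hxy => by
    by_contra h
    have h1 := hX (not_le.mp h)
    simp only [hY] at h1
    linarith
  have hYc : Continuous Y := hYm.continuous_of_surjective (fun a => ⟨_, hYX a⟩)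
  have hYtop : Tendsto Y atTop atTop :=
    tendsto_atTop_atTop.2 fun b => ⟨b + t * w₀ b, fun x hx => by
      have := hYm hx
      rwa [hYX] at this⟩
  have hYbot : Tendsto Y atBot atBot :=
    tendsto_atBot_atBot.2 fun b => ⟨b + t * w₀ b, fun x hx => by
      have := hYm hx
      rwa [hYX] at this⟩
  have hd : ∀ a, HasDerivAt w₀ (deriv w₀ a) a := fun a =>
    ((hw.differentiable (by norm_num)) a).hasDerivAt
  have hp : ∀ a, 0 < 1 + t * deriv w₀ a := fun a => by
    have := mul_nonneg ht (hpos a).le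
    linarith
  have hYd : ∀ x, HasDerivAt Y (1 + t * deriv w₀ (Y x))⁻¹ x := fun x =>
    HasDerivAt.of_local_left_inverse (f := fun a => a + t * w₀ a) hYc.continuousAt
      ((hasDerivAt_id (Y x)).add ((hd (Y x)).const_mul t)) (hp _).ne'
      (Eventually.of_forall hY)
  have hgd : ∀ x, HasDerivAt (fun y => w₀ (Y y))
      (deriv w₀ (Y x) * (1 + t * deriv w₀ (Y x))⁻¹) x := fun x =>
    (hd (Y x)).comp x (hYd x)
  have hg0 : ∀ x, 0 ≤ deriv w₀ (Y x) * (1 + t * deriv w₀ (Y x))⁻¹ := fun x =>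
    mul_nonneg (hpos _).le (inv_nonneg.2 (hp _).le)
  have h1 := hplus.comp hYtop
  have h2 := hminus.comp hYbot
  have hneg := integrableOn_Ioi_deriv_of_nonneg' (a := (0 : ℝ)) (l := -wm)
    (g := fun x => - w₀ (Y (-x)))
    (g' := fun x => deriv w₀ (Y (-x)) * (1 + t * deriv w₀ (Y (-x)))⁻¹)
    (fun x _ => by
      have h := ((hgd (-x)).comp x (hasDerivAt_neg x)).fun_neg
      refine h.congr_deriv ?_
      ring)
    (fun x _ => hg0 (-x)) (h2.comp tendsto_neg_atTop_atBot).neg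
  have hint : Integrable (fun x => deriv w₀ (Y x) * (1 + t * deriv w₀ (Y x))⁻¹) := by
    rw [← integrableOn_univ, ← Set.Iic_union_Ioi (a := (0:ℝ))]
    refine IntegrableOn.union ?_
      (integrableOn_Ioi_deriv_of_nonneg' (fun x _ => hgd x) (fun x _ => hg0 x) h1)
    rw [integrableOn_Iic_iff_integrableOn_Iio]
    have hmp := (Measure.measurePreserving_neg (volume : Measure ℝ)).integrableOn_comp_preimage
      (Homeomorph.neg ℝ).measurableEmbedding
      (f := fun x => deriv w₀ (Y x) * (1 + t * deriv w₀ (Y x))⁻¹) (s := Set.Iio 0)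
    refine hmp.1 ?_
    simpa [Function.comp_def] using hneg
  refine ⟨_, hgd, hg0, fun x => ?_, hint, integral_of_hasDerivAt_of_tendsto hgd hint h2 h1⟩
  rw [← div_eq_mul_inv, div_le_div_iff₀ (hp _) (by positivity)]
  nlinarith [hbd (Y x)]

/-- L^r decay of the derivative (Lemma 2.1(2)): if `0 < w₀' ≤ K` and `w₀ → wm, wp` at
`∓∞`, then the Burgers solution `w(t,x) = w₀(Y(t,x))` satisfies, for every `r ≥ 1` and
`t ≥ 0`, `∫ (∂ₓw(t,x))^r dx ≤ (wp - wm)·(K/(1+Kt))^(r-1)`; in particular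
`‖∂ₓw(t)‖_{L^r} ≤ C_r (1+t)^(-1+1/r)`. -/
theorem burgers_derivative_decay_Lr (K : ℝ) (hK : 0 < K)
    (w₀ : ℝ → ℝ) (hw : ContDiff ℝ 1 w₀)
    (hpos : ∀ x, 0 < deriv w₀ x) (hbd : ∀ x, deriv w₀ x ≤ K)
    (wm wp : ℝ)
    (hminus : Tendsto w₀ atBot (nhds wm)) (hplus : Tendsto w₀ atTop (nhds wp))
    (Y : ℝ → ℝ → ℝ) (hY : ∀ t : ℝ, 0 ≤ t → ∀ x, Y t x + t * w₀ (Y t x) = x)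
    (w : ℝ → ℝ → ℝ) (hwdef : ∀ t x, w t x = w₀ (Y t x)) :
    (∀ r : ℝ, 1 ≤ r → ∀ t : ℝ, 0 ≤ t →
      (∫ x, (deriv (fun y => w t y) x) ^ r) ≤ (wp - wm) * (K / (1 + K * t)) ^ (r - 1)) ∧
    (∀ r : ℝ, 1 ≤ r → ∃ C : ℝ, 0 < C ∧ ∀ t : ℝ, 0 ≤ t →
      (∫ x, (deriv (fun y => w t y) x) ^ r) ^ (1 / r) ≤ C * (1 + t) ^ (-1 + 1 / r)) := by
  have key : ∀ r : ℝ, 1 ≤ r → ∀ t : ℝ, 0 ≤ t →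
      (0 ≤ ∫ x, (deriv (fun y => w t y) x) ^ r) ∧ 0 ≤ wp - wm ∧
      (∫ x, (deriv (fun y => w t y) x) ^ r) ≤ (wp - wm) * (K / (1 + K * t)) ^ (r - 1) := by
    intro r hr t ht
    obtain ⟨g, hgd, hg0, hgK, hint, hI⟩ := burgers_aux K hK w₀ hw hpos hbd wm wp hminus hplus
      t ht (Y t) (hY t ht)
    have hw' : (fun y => w t y) = fun y => w₀ (Y t y) := funext (hwdef t)
    have hder : ∀ x, deriv (fun y => w t y) x = g x := fun x => by
      rw [hw']; exact (hgd x).deriv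
    simp only [hder]
    refine ⟨integral_nonneg fun x => Real.rpow_nonneg (hg0 x) r,
      hI ▸ integral_nonneg hg0, ?_⟩
    rw [← hI, ← integral_mul_const]
    refine integral_mono_of_nonneg (Eventually.of_forall fun x => Real.rpow_nonneg (hg0 x) r)
      (hint.mul_const _) (Eventually.of_forall fun x => ?_)
    show g x ^ r ≤ g x * (K / (1 + K * t)) ^ (r - 1)
    have e : g x ^ r = g x * g x ^ (r - 1) := by
      rcases (hg0 x).eq_or_lt with h | h
      · rw [← h, Real.zero_rpow (by linarith), zero_mul]
      · rw [Real.rpow_sub_one h.ne']; field_simp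
    rw [e]
    exact mul_le_mul_of_nonneg_left
      (Real.rpow_le_rpow (hg0 x) (hgK x) (by linarith)) (hg0 x)
  refine ⟨fun r hr t ht => (key r hr t ht).2.2, fun r hr => ?_⟩
  have hr0 : 0 < r := by linarith
  have hD : 0 ≤ wp - wm := (key 1 le_rfl 0 le_rfl).2.1
  have hs : 0 ≤ (r - 1) * (1 / r) := mul_nonneg (by linarith) (by positivity)
  have hm : 0 < max K 1 := lt_max_of_lt_left hK
  have hA : 0 ≤ (wp - wm) ^ (1 / r) * (max K 1) ^ ((r - 1) * (1 / r)) :=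
    mul_nonneg (Real.rpow_nonneg hD _) (Real.rpow_nonneg hm.le _)
  refine ⟨(wp - wm) ^ (1 / r) * (max K 1) ^ ((r - 1) * (1 / r)) + 1, by linarith, ?_⟩
  intro t ht
  obtain ⟨h0, -, h⟩ := key r hr t ht
  have h1t : 0 < 1 + t := by linarith
  have hKt : 0 < 1 + K * t := by positivity
  have hq : 0 ≤ K / (1 + K * t) := by positivity
  have hq2 : K / (1 + K * t) ≤ max K 1 / (1 + t) := by
    rw [div_le_div_iff₀ hKt h1t]
    nlinarith [le_max_left K 1, le_max_right K 1, mul_nonneg hK.le ht,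
      mul_le_mul_of_nonneg_right (le_max_right K 1) (mul_nonneg hK.le ht)]
  have he : -1 + 1 / r = -((r - 1) * (1 / r)) := by field_simp; ring
  calc (∫ x, (deriv (fun y => w t y) x) ^ r) ^ (1 / r)
      ≤ ((wp - wm) * (K / (1 + K * t)) ^ (r - 1)) ^ (1 / r) :=
        Real.rpow_le_rpow h0 h (by positivity)
    _ = (wp - wm) ^ (1 / r) * (K / (1 + K * t)) ^ ((r - 1) * (1 / r)) := by
        rw [Real.mul_rpow hD (Real.rpow_nonneg hq _), ← Real.rpow_mul hq]
    _ ≤ (wp - wm) ^ (1 / r) * (max K 1 / (1 + t)) ^ ((r - 1) * (1 / r)) :=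
        mul_le_mul_of_nonneg_left (Real.rpow_le_rpow hq hq2 hs) (Real.rpow_nonneg hD _)
    _ = ((wp - wm) ^ (1 / r) * (max K 1) ^ ((r - 1) * (1 / r))) * (1 + t) ^ (-1 + 1 / r) := by
        rw [he, Real.div_rpow hm.le h1t.le, Real.rpow_neg h1t.le, mul_assoc]
        rfl
    _ ≤ _ := mul_le_mul_of_nonneg_right (by linarith) (Real.rpow_nonneg h1t.le _)
end

section
/- In the setting below, for all t ∈ [0,T]: sup_{x∈ℝ} |φ(t,x)| ≤ sup_{x∈ℝ} |φ(0,x)| + c₂ · ∫₀^t sup_{x∈ℝ} |∂ₓ²U(τ,x)| dτ; in particular sup_{x∈ℝ} |φ(t,x)| ≤ sup_{x∈ℝ} |φ(0,x)| + 8·c₂·C_U for all t ∈ [0,T]. -/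
open MeasureTheory Filter Set intervalIntegral

/-- `L²` norm in the space variable. -/
noncomputable def L2norm (g : ℝ → ℝ) : ℝ := (∫ x : ℝ, (g x) ^ 2) ^ ((1 : ℝ) / 2)

lemma pert_pd_smooth (V : ℝ → ℝ → ℝ) (hV : ContDiff ℝ (⊤ : ℕ∞) (fun q : ℝ × ℝ => V q.1 q.2)) :
    ContDiff ℝ (⊤ : ℕ∞) (fun q : ℝ × ℝ => deriv (V q.1) q.2) := by
  have h1 : (fun q : ℝ × ℝ => deriv (V q.1) q.2)
      = fun q => fderiv ℝ (fun q : ℝ × ℝ => V q.1 q.2) q ((0 : ℝ), (1 : ℝ)) := by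
    funext q
    have hd : HasFDerivAt (fun q : ℝ × ℝ => V q.1 q.2)
        (fderiv ℝ (fun q : ℝ × ℝ => V q.1 q.2) q) (q.1, q.2) :=
      ((hV.differentiable (by simp)) q).hasFDerivAt
    have hl : HasDerivAt (fun y : ℝ => (q.1, y)) ((0 : ℝ), (1 : ℝ)) q.2 :=
      (hasDerivAt_const _ _).prodMk (hasDerivAt_id _)
    exact (hd.comp_hasDerivAt q.2 hl).deriv
  rw [h1]
  exact (hV.fderiv_right (m := (⊤ : ℕ∞)) (by simp)).clm_apply contDiff_const

lemma pert_slice_x (V : ℝ → ℝ → ℝ) (hV : ContDiff ℝ (⊤ : ℕ∞) (fun q : ℝ × ℝ => V q.1 q.2))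
    (t : ℝ) : ContDiff ℝ (⊤ : ℕ∞) (V t) :=
  hV.comp (contDiff_const.prodMk contDiff_id : ContDiff ℝ (⊤ : ℕ∞) (fun y : ℝ => (t, y)))

lemma pert_slice_t (V : ℝ → ℝ → ℝ) (hV : ContDiff ℝ (⊤ : ℕ∞) (fun q : ℝ × ℝ => V q.1 q.2))
    (x : ℝ) : ContDiff ℝ (⊤ : ℕ∞) (fun s => V s x) :=
  hV.comp (contDiff_id.prodMk contDiff_const : ContDiff ℝ (⊤ : ℕ∞) (fun s : ℝ => (s, x)))

lemma pert_second_deriv (h : ℝ → ℝ) (hc : Continuous h) (x : ℝ) (hm : ∀ y, h y ≤ h x) :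
    deriv (deriv h) x ≤ 0 := by
  by_contra hpos
  push Not at hpos
  have hmax : IsLocalMax h x := Filter.Eventually.of_forall hm
  have hmin := isLocalMin_of_deriv_deriv_pos hpos hmax.deriv_eq_zero hc.continuousAt
  have hconst : h =ᶠ[nhds x] fun _ => h x := by
    filter_upwards [hmin] with y hy
    exact le_antisymm (hm y) hy
  have h2 := hconst.deriv.deriv_eq
  simp at h2
  linarith

lemma pert_sup_bound (φ : ℝ → ℝ → ℝ) (T B K : ℝ)
    (hdt : ∀ x, Differentiable ℝ (fun s => φ s x)) (hcx : ∀ t, Continuous (φ t))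
    (hB : ∀ t ∈ Icc (0 : ℝ) T, ∀ x, |φ t x| ≤ B)
    (hK0 : 0 ≤ K)
    (hK : ∀ t ∈ Icc (0 : ℝ) T, ∀ x, |deriv (fun s => φ s x) t| ≤ K)
    (hlim : ∀ t ∈ Icc (0 : ℝ) T,
      Tendsto (φ t) atTop (nhds 0) ∧ Tendsto (φ t) atBot (nhds 0))
    (g : ℝ → ℝ) (hg0 : ∀ t ∈ Icc (0 : ℝ) T, 0 ≤ g t)
    (hgi : ∀ t ∈ Icc (0 : ℝ) T, IntervalIntegrable g volume 0 t)
    (hmax : ∀ t ∈ Icc (0 : ℝ) T, ∀ x, (∀ y, |φ t y| ≤ |φ t x|) →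
      (0 < φ t x → deriv (fun s => φ s x) t ≤ g t) ∧
      (φ t x < 0 → -deriv (fun s => φ s x) t ≤ g t)) :
    ∀ t ∈ Icc (0 : ℝ) T, ∀ x, |φ t x| ≤ (⨆ y : ℝ, |φ 0 y|) + ∫ τ in (0:ℝ)..t, g τ := by
  intro t ht x
  set N : ℝ → ℝ := fun s => ⨆ y : ℝ, |φ s y| with hN
  have hbd : ∀ s ∈ Icc (0 : ℝ) T, BddAbove (range fun y => |φ s y|) := by
    intro s hs
    refine ⟨B, ?_⟩
    rintro _ ⟨y, rfl⟩
    exact hB s hs y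
  have hle : ∀ s ∈ Icc (0 : ℝ) T, ∀ y, |φ s y| ≤ N s := fun s hs y => le_ciSup (hbd s hs) y
  have hlipx : ∀ s ∈ Icc (0 : ℝ) T, ∀ r ∈ Icc (0 : ℝ) T, ∀ y, |φ s y - φ r y| ≤ K * |s - r| := by
    intro s hs r hr y
    exact Convex.norm_image_sub_le_of_norm_deriv_le (f := fun s => φ s y) (s := Icc (0 : ℝ) T)
      (fun z _ => hdt y z) (fun z hz => hK z hz y) (convex_Icc _ _) hr hs
  have hN1 : ∀ s ∈ Icc (0 : ℝ) T, ∀ r ∈ Icc (0 : ℝ) T, N s ≤ N r + K * |s - r| := by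
    intro s hs r hr
    apply ciSup_le
    intro y
    have h1 := hlipx s hs r hr y
    have h2 := hle r hr y
    have h3 := abs_sub_abs_le_abs_sub (φ s y) (φ r y)
    linarith
  have hsub : uIcc 0 t ⊆ Icc 0 T := by
    rw [uIcc_of_le ht.1]; exact Icc_subset_Icc le_rfl ht.2
  have hlip : LipschitzOnWith K.toNNReal N (uIcc 0 t) := by
    apply LipschitzOnWith.of_dist_le_mul
    intro s hs r hr
    rw [Real.coe_toNNReal _ hK0, Real.dist_eq, Real.dist_eq, abs_sub_le_iff]
    have h1 := hN1 s (hsub hs) r (hsub hr)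
    have h2 := hN1 r (hsub hr) s (hsub hs)
    rw [abs_sub_comm r s] at h2
    constructor <;> linarith
  have hac : AbsolutelyContinuousOnInterval N 0 t := hlip.absolutelyContinuousOnInterval
  have hftc := hac.integral_deriv_eq_sub
  have hN0 : ∀ s ∈ Icc (0 : ℝ) T, 0 ≤ N s := fun s hs => (abs_nonneg _).trans (hle s hs 0)
  have hder : ∀ s ∈ Ioo (0 : ℝ) T, DifferentiableAt ℝ N s → deriv N s ≤ g s := by
    intro s hs hd
    have hs' : s ∈ Icc (0 : ℝ) T := Ioo_subset_Icc_self hs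
    have hnb : ∀ᶠ r in nhds s, r ∈ Icc (0 : ℝ) T :=
      Filter.mem_of_superset (Ioo_mem_nhds hs.1 hs.2) Ioo_subset_Icc_self
    rcases (hN0 s hs').eq_or_lt with h0 | hpos
    · have hm : IsLocalMin N s := by
        filter_upwards [hnb] with r hr
        rw [← h0]; exact hN0 r hr
      rw [hm.deriv_eq_zero]; exact hg0 s hs'
    · obtain ⟨x0, hx0⟩ := exists_lt_of_lt_ciSup hpos
      have hev : ∀ᶠ y in cocompact ℝ, |φ s y| ≤ |φ s x0| := by
        rw [cocompact_eq_atBot_atTop, eventually_sup]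
        have ha := (hlim s hs').2.abs
        have hb := (hlim s hs').1.abs
        rw [abs_zero] at ha hb
        exact ⟨(ha.eventually_lt_const hx0).mono fun _ h => h.le,
          (hb.eventually_lt_const hx0).mono fun _ h => h.le⟩
      obtain ⟨z, hz⟩ := (hcx s).abs.exists_forall_ge' x0 hev
      have hNz : N s = |φ s z| := le_antisymm (ciSup_le hz) (hle s hs' z)
      have hzpos : 0 < |φ s z| := hNz ▸ hpos
      obtain ⟨hp, hn⟩ := hmax s hs' z hz
      rcases lt_or_gt_of_ne (abs_pos.mp hzpos) with hneg | hpo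
      · have hm : IsLocalMin (fun r => N r + φ r z) s := by
          filter_upwards [hnb] with r hr
          have h1 := hle r hr z
          have h2 := neg_abs_le (φ r z)
          rw [hNz, abs_of_neg hneg]; linarith
        have h3 := hm.hasDerivAt_eq_zero (hd.hasDerivAt.add (hdt z s).hasDerivAt)
        have := hn hneg
        linarith
      · have hm : IsLocalMin (fun r => N r - φ r z) s := by
          filter_upwards [hnb] with r hr
          have h1 := hle r hr z
          have h2 := le_abs_self (φ r z)
          rw [hNz, abs_of_pos hpo]; linarith
        have h3 := hm.hasDerivAt_eq_zero (hd.hasDerivAt.sub (hdt z s).hasDerivAt)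
        have := hp hpo
        linarith
  have hae : ∀ᵐ s, s ∈ Icc 0 t → deriv N s ≤ g s := by
    have e0 : ∀ᵐ s : ℝ, s ≠ 0 := Measure.ae_ne volume 0
    have e1 : ∀ᵐ s : ℝ, s ≠ t := Measure.ae_ne volume t
    filter_upwards [hac.ae_differentiableAt, e0, e1] with s hs h0 h1 hst
    have hst' : s ∈ uIcc 0 t := by rw [uIcc_of_le ht.1]; exact hst
    exact hder s ⟨lt_of_le_of_ne hst.1 (Ne.symm h0), (lt_of_le_of_ne hst.2 h1).trans_le ht.2⟩
      (hs hst')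
  have hmono : ∫ s in (0:ℝ)..t, deriv N s ≤ ∫ s in (0:ℝ)..t, g s := by
    apply intervalIntegral.integral_mono_ae_restrict ht.1 hac.intervalIntegrable_deriv (hgi t ht)
    exact (ae_restrict_iff' measurableSet_Icc).2 hae
  have := hle t ht x
  have e : N 0 = ⨆ y : ℝ, |φ 0 y| := rfl
  linarith

lemma pert_decay_integral (C t : ℝ) (hC : 0 ≤ C) (ht : 0 ≤ t) :
    IntervalIntegrable (fun τ : ℝ => C * (1 + τ) ^ (-(9 : ℝ) / 8)) volume 0 t ∧
    ∫ τ in (0:ℝ)..t, C * (1 + τ) ^ (-(9 : ℝ) / 8) ≤ 8 * C := by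
  have hI : IntervalIntegrable (fun τ : ℝ => C * (1 + τ) ^ (-(9 : ℝ) / 8)) volume 0 t := by
    apply ContinuousOn.intervalIntegrable
    rw [uIcc_of_le ht]
    apply continuousOn_const.mul
    apply ContinuousOn.rpow_const (by fun_prop)
    intro s hs
    left
    have := hs.1
    positivity
  refine ⟨hI, ?_⟩
  rw [intervalIntegral.integral_eq_sub_of_hasDerivAt
    (f := fun τ => -(8 * C) * (1 + τ) ^ (-(1 : ℝ) / 8)) ?_ hI]
  · have : 0 ≤ (1 + t) ^ (-(1 : ℝ) / 8) := by positivity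
    simp
    nlinarith
  · intro s hs
    rw [uIcc_of_le ht] at hs
    have h1 : 0 < 1 + s := by linarith [hs.1]
    have h2 : HasDerivAt (fun τ : ℝ => 1 + τ) 1 s := (hasDerivAt_id s).const_add 1
    have h3 := (h2.rpow_const (p := -(1 : ℝ) / 8) (Or.inl h1.ne')).const_mul (-(8 * C))
    convert! h3 using 1
    norm_num
    ring

/-- Lemma 4.1 (uniform `L^∞` bound on the perturbation): in the setting of the Cauchy
problem for the scalar conservation law with pseudo-plastic viscosity (`0 < p < 1`),
strictly convex flux `f`, smoothed rarefaction wave `U`, and a smooth decaying solution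
`φ` of the perturbation equation on `[0,T]×ℝ`, one has for all `t ∈ [0,T]` and `x`:
`|φ(t,x)| ≤ sup|φ(0,·)| + c₂·∫₀^t sup_x|∂ₓ²U(τ,·)| dτ ≤ sup|φ(0,·)| + 8 c₂ C_U`. -/
theorem perturbation_Linfty_bound
    (p c₁ c₂ : ℝ) (hp0 : 0 < p) (hp1 : p < 1) (hc1 : 0 < c₁) (hc12 : c₁ ≤ c₂)
    (f : ℝ → ℝ) (hf : ContDiff ℝ (⊤ : ℕ∞) f) (hconv : ∀ u : ℝ, 0 < deriv (deriv f) u)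
    (σ : ℝ → ℝ) (hσs : ContDiff ℝ (⊤ : ℕ∞) σ) (hσ0 : σ 0 = 0)
    (hσ' : ∀ v : ℝ, c₁ * (1 + v ^ 2) ^ ((p - 1) / 2) ≤ deriv σ v ∧
      deriv σ v ≤ c₂ * (1 + v ^ 2) ^ ((p - 1) / 2))
    (um up CU : ℝ) (hu : um < up) (hCU : 0 < CU)
    (U : ℝ → ℝ → ℝ) (hUs : ContDiff ℝ (⊤ : ℕ∞) (fun q : ℝ × ℝ => U q.1 q.2))
    (hUpde : ∀ t : ℝ, 0 ≤ t → ∀ x,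
      deriv (fun s => U s x) t + deriv (fun y => f (U t y)) x = 0)
    (hUrange : ∀ t : ℝ, 0 ≤ t → ∀ x, um < U t x ∧ U t x < up)
    (hUx : ∀ t : ℝ, 0 ≤ t → ∀ x, 0 < deriv (U t) x)
    (hU1 : ∀ t : ℝ, 0 ≤ t → ∀ x, deriv (U t) x ≤ CU * (1 + t)⁻¹)
    (hU2 : ∀ t : ℝ, 0 ≤ t → L2norm (deriv (U t)) ≤ CU * (1 + t) ^ (-(1 : ℝ) / 2))
    (hU3 : ∀ t : ℝ, 0 ≤ t → (∫ x : ℝ, |deriv (deriv (U t)) x|) ≤ CU * (1 + t)⁻¹)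
    (hU4 : ∀ t : ℝ, 0 ≤ t → ∀ x,
      L2norm (deriv (deriv (U t))) + |deriv (deriv (U t)) x| ≤ CU * (1 + t) ^ (-(9 : ℝ) / 8))
    (hU5 : ∀ t : ℝ, 0 ≤ t →
      L2norm (deriv (deriv (deriv (U t)))) ≤ CU * (1 + t) ^ (-(9 : ℝ) / 8))
    (hU6 : ∀ t : ℝ, 0 ≤ t → ∀ x,
      L2norm (fun y => deriv (fun s => deriv (U s) y) t)
        + |deriv (fun s => deriv (U s) x) t| ≤ CU * (1 + t)⁻¹)
    (T : ℝ) (hT : 0 < T)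
    (φ : ℝ → ℝ → ℝ) (hφs : ContDiff ℝ (⊤ : ℕ∞) (fun q : ℝ × ℝ => φ q.1 q.2))
    (hpde : ∀ t ∈ Icc (0 : ℝ) T, ∀ x : ℝ,
      deriv (fun s => φ s x) t
        + deriv (fun y => f (U t y + φ t y) - f (U t y)) x
        - deriv (fun y => σ (deriv (U t) y + deriv (φ t) y) - σ (deriv (U t) y)) x
      = deriv (fun y => σ (deriv (U t) y)) x)
    (hbdd : ∃ B : ℝ, ∀ t ∈ Icc (0 : ℝ) T, ∀ x : ℝ,
      |φ t x| + |deriv (φ t) x| + |deriv (deriv (φ t)) x|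
        + |deriv (deriv (deriv (φ t))) x| + |deriv (fun s => deriv (φ s) x) t| ≤ B)
    (hint : ∀ t ∈ Icc (0 : ℝ) T,
      Integrable (fun x : ℝ => (φ t x) ^ 2) ∧
      Integrable (fun x : ℝ => (deriv (φ t) x) ^ 2) ∧
      Integrable (fun x : ℝ => (deriv (deriv (φ t)) x) ^ 2) ∧
      Integrable (fun x : ℝ => (deriv (deriv (deriv (φ t))) x) ^ 2) ∧
      Integrable (fun x : ℝ => (deriv (fun s => deriv (φ s) x) t) ^ 2))
    (hintu : ∃ B : ℝ, ∀ t ∈ Icc (0 : ℝ) T,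
      (∫ x : ℝ, (φ t x) ^ 2) + (∫ x : ℝ, (deriv (φ t) x) ^ 2)
        + (∫ x : ℝ, (deriv (deriv (φ t)) x) ^ 2)
        + (∫ x : ℝ, (deriv (deriv (deriv (φ t))) x) ^ 2)
        + (∫ x : ℝ, (deriv (fun s => deriv (φ s) x) t) ^ 2) ≤ B)
    (hlim : ∀ t ∈ Icc (0 : ℝ) T,
      Tendsto (φ t) atTop (nhds 0) ∧ Tendsto (φ t) atBot (nhds 0) ∧
      Tendsto (deriv (φ t)) atTop (nhds 0) ∧ Tendsto (deriv (φ t)) atBot (nhds 0) ∧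
      Tendsto (deriv (deriv (φ t))) atTop (nhds 0) ∧
      Tendsto (deriv (deriv (φ t))) atBot (nhds 0)) :
    (∀ t ∈ Icc (0 : ℝ) T, ∀ x : ℝ,
      |φ t x| ≤ (⨆ y : ℝ, |φ 0 y|)
        + c₂ * ∫ τ in (0:ℝ)..t, ⨆ y : ℝ, |deriv (deriv (U τ)) y|) ∧
    (∀ t ∈ Icc (0 : ℝ) T, ∀ x : ℝ,
      |φ t x| ≤ (⨆ y : ℝ, |φ 0 y|) + 8 * c₂ * CU) := by
  have hc2 : 0 < c₂ := hc1.trans_le hc12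
  -- bounds on the derivative of the viscosity
  have hσb : ∀ v, 0 ≤ deriv σ v ∧ deriv σ v ≤ c₂ := by
    intro v
    have h1 : (1 + v ^ 2) ^ ((p - 1) / 2) ≤ 1 :=
      Real.rpow_le_one_of_one_le_of_nonpos (by nlinarith [sq_nonneg v]) (by linarith)
    have h0 : 0 ≤ (1 + v ^ 2) ^ ((p - 1) / 2) := by positivity
    obtain ⟨ha, hb⟩ := hσ' v
    exact ⟨(mul_nonneg hc1.le h0).trans ha, hb.trans (by nlinarith)⟩
  -- smoothness
  have hU1s := pert_pd_smooth U hUs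
  have hU2s := pert_pd_smooth (fun t => deriv (U t)) hU1s
  have hφ1s := pert_pd_smooth φ hφs
  have hUd : ∀ t x, HasDerivAt (U t) (deriv (U t) x) x := fun t x =>
    ((pert_slice_x U hUs t).differentiable (by simp) x).hasDerivAt
  have hUdd : ∀ t x, HasDerivAt (deriv (U t)) (deriv (deriv (U t)) x) x := fun t x =>
    ((pert_slice_x (fun t => deriv (U t)) hU1s t).differentiable (by simp) x).hasDerivAt
  have hφd : ∀ t x, HasDerivAt (φ t) (deriv (φ t) x) x := fun t x =>
    ((pert_slice_x φ hφs t).differentiable (by simp) x).hasDerivAt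
  have hφdd : ∀ t x, HasDerivAt (deriv (φ t)) (deriv (deriv (φ t)) x) x := fun t x =>
    ((pert_slice_x (fun t => deriv (φ t)) hφ1s t).differentiable (by simp) x).hasDerivAt
  have hfd : ∀ u, HasDerivAt f (deriv f u) u := fun u =>
    (hf.differentiable (by simp) u).hasDerivAt
  have hσd : ∀ u, HasDerivAt σ (deriv σ u) u := fun u =>
    (hσs.differentiable (by simp) u).hasDerivAt
  have hf1 : ContDiff ℝ (⊤ : ℕ∞) (deriv f) := by
    have := pert_pd_smooth (fun _ => f) (hf.comp contDiff_snd)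
    exact pert_slice_x (fun _ => deriv f) this 0
  have hfmono : StrictMono (deriv f) := strictMono_of_deriv_pos hconv
  -- the equation in expanded form
  have hkey : ∀ t ∈ Icc (0 : ℝ) T, ∀ x, deriv (fun s => φ s x) t
      = deriv σ (deriv (U t) x + deriv (φ t) x) * (deriv (deriv (U t)) x + deriv (deriv (φ t)) x)
        - (deriv f (U t x + φ t x) * (deriv (U t) x + deriv (φ t) x)
          - deriv f (U t x) * deriv (U t) x) := by
    intro t ht x
    have h := hpde t ht x
    have e1 : HasDerivAt (fun y => f (U t y + φ t y) - f (U t y)) _ x :=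
      ((hfd _).comp x ((hUd t x).add (hφd t x))).sub ((hfd _).comp x (hUd t x))
    have e3 : HasDerivAt (fun y => σ (deriv (U t) y)) _ x := (hσd _).comp x (hUdd t x)
    have e2 : HasDerivAt (fun y => σ (deriv (U t) y + deriv (φ t) y) - σ (deriv (U t) y)) _ x :=
      ((hσd _).comp x ((hUdd t x).add (hφdd t x))).sub e3
    rw [e1.deriv, e2.deriv, e3.deriv] at h
    simp only [Pi.add_apply] at h
    linarith
  -- the sup of the second derivative
  have hL2 : ∀ h : ℝ → ℝ, 0 ≤ L2norm h := fun h =>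
    Real.rpow_nonneg (integral_nonneg fun x => sq_nonneg _) _
  have hUxx : ∀ t : ℝ, 0 ≤ t → ∀ x, |deriv (deriv (U t)) x| ≤ CU * (1 + t) ^ (-(9 : ℝ) / 8) := by
    intro t ht x
    have := hU4 t ht x
    have := hL2 (deriv (deriv (U t)))
    linarith
  have hdec1 : ∀ t : ℝ, 0 ≤ t → CU * (1 + t) ^ (-(9 : ℝ) / 8) ≤ CU := by
    intro t ht
    have : (1 + t) ^ (-(9 : ℝ) / 8) ≤ 1 :=
      Real.rpow_le_one_of_one_le_of_nonpos (by linarith) (by norm_num)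
    nlinarith
  have hbddU : ∀ t : ℝ, 0 ≤ t → BddAbove (range fun y => |deriv (deriv (U t)) y|) := by
    intro t ht
    refine ⟨CU * (1 + t) ^ (-(9 : ℝ) / 8), ?_⟩
    rintro _ ⟨y, rfl⟩
    exact hUxx t ht y
  set G : ℝ → ℝ := fun τ => ⨆ y : ℝ, |deriv (deriv (U τ)) y| with hG
  have hGle : ∀ t : ℝ, 0 ≤ t → G t ≤ CU * (1 + t) ^ (-(9 : ℝ) / 8) := fun t ht =>
    ciSup_le (hUxx t ht)
  have hleG : ∀ t : ℝ, 0 ≤ t → ∀ x, |deriv (deriv (U t)) x| ≤ G t := fun t ht x =>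
    le_ciSup (hbddU t ht) x
  have hG0 : ∀ t : ℝ, 0 ≤ t → 0 ≤ G t := fun t ht => (abs_nonneg _).trans (hleG t ht 0)
  have hGm : Measurable (fun τ => G (max τ 0)) := by
    apply LowerSemicontinuous.measurable
    apply lowerSemicontinuous_ciSup (f := fun y τ => |deriv (deriv (U (max τ 0))) y|)
    · exact fun τ => hbddU _ (le_max_right _ _)
    · intro y
      apply Continuous.lowerSemicontinuous
      have hc : Continuous (fun s => deriv (deriv (U s)) y) :=
        (pert_slice_t (fun t => deriv (deriv (U t))) hU2s y).continuous
      exact (hc.comp (continuous_id.max continuous_const)).abs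
  have hGi : ∀ t : ℝ, 0 ≤ t → IntervalIntegrable G volume 0 t := by
    intro t ht
    have h1 : IntervalIntegrable (fun τ => G (max τ 0)) volume 0 t := by
      apply (pert_decay_integral CU t hCU.le ht).1.mono_fun' hGm.aestronglyMeasurable
      rw [uIoc_of_le ht]
      refine (ae_restrict_iff' measurableSet_Ioc).2 (Filter.Eventually.of_forall ?_)
      intro s hs
      simp only [max_eq_left hs.1.le]
      rw [Real.norm_of_nonneg (hG0 s hs.1.le)]
      exact hGle s hs.1.le
    refine h1.congr ?_
    intro s hs
    rw [uIoc_of_le ht] at hs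
    simp only [max_eq_left hs.1.le]
  -- bound on the time derivative
  obtain ⟨B, hB⟩ := hbdd
  have hBφ : ∀ t ∈ Icc (0 : ℝ) T, ∀ x, |φ t x| ≤ B ∧ |deriv (φ t) x| ≤ B ∧
      |deriv (deriv (φ t)) x| ≤ B := by
    intro t ht x
    have := hB t ht x
    have h1 := abs_nonneg (φ t x)
    have h2 := abs_nonneg (deriv (φ t) x)
    have h3 := abs_nonneg (deriv (deriv (φ t)) x)
    have h4 := abs_nonneg (deriv (deriv (deriv (φ t))) x)
    have h5 := abs_nonneg (deriv (fun s => deriv (φ s) x) t)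
    refine ⟨?_, ?_, ?_⟩ <;> linarith
  have hB0 : 0 ≤ B := (abs_nonneg _).trans (hBφ 0 ⟨le_rfl, hT.le⟩ 0).1
  obtain ⟨F, hF⟩ := (isCompact_Icc (a := um - B) (b := up + B)).exists_bound_of_continuousOn
    hf1.continuous.continuousOn
  have hUxb : ∀ t : ℝ, 0 ≤ t → ∀ x, |deriv (U t) x| ≤ CU := by
    intro t ht x
    rw [abs_of_pos (hUx t ht x)]
    have : (1 + t)⁻¹ ≤ 1 := inv_le_one_of_one_le₀ (by linarith)
    have := hU1 t ht x
    nlinarith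
  have hK : ∀ t ∈ Icc (0 : ℝ) T, ∀ x, |deriv (fun s => φ s x) t|
      ≤ c₂ * (CU + B) + (F * (CU + B) + F * CU) := by
    intro t ht x
    obtain ⟨b0, b1, b2⟩ := hBφ t ht x
    have u1 := hUxb t ht.1 x
    have u2 := (hUxx t ht.1 x).trans (hdec1 t ht.1)
    obtain ⟨r1, r2⟩ := hUrange t ht.1 x
    have f1 := hF (U t x + φ t x) (by
      have := abs_le.1 b0
      constructor <;> linarith)
    have f2 := hF (U t x) (by constructor <;> linarith)
    rw [Real.norm_eq_abs] at f1 f2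
    have hF0 : 0 ≤ F := (abs_nonneg _).trans f2
    rw [hkey t ht x]
    have s1 : |deriv σ (deriv (U t) x + deriv (φ t) x)| ≤ c₂ := by
      rw [abs_of_nonneg (hσb _).1]; exact (hσb _).2
    have a1 : |deriv (deriv (U t)) x + deriv (deriv (φ t)) x| ≤ CU + B :=
      (abs_add_le _ _).trans (add_le_add u2 b2)
    have a2 : |deriv (U t) x + deriv (φ t) x| ≤ CU + B :=
      (abs_add_le _ _).trans (add_le_add u1 b1)
    refine (abs_sub _ _).trans (add_le_add ?_ ((abs_sub _ _).trans (add_le_add ?_ ?_)))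
    · rw [abs_mul]; exact mul_le_mul s1 a1 (abs_nonneg _) hc2.le
    · rw [abs_mul]; exact mul_le_mul f1 a2 (abs_nonneg _) hF0
    · rw [abs_mul]; exact mul_le_mul f2 u1 (abs_nonneg _) hF0
  have hσG : ∀ t : ℝ, 0 ≤ t → ∀ x v, |deriv σ v * deriv (deriv (U t)) x| ≤ c₂ * G t := by
    intro t ht x v
    rw [abs_mul, abs_of_nonneg (hσb v).1]
    exact mul_le_mul (hσb v).2 (hleG t ht x) (abs_nonneg _) hc2.le
  have hmain := pert_sup_bound φ T B _
    (fun x => (pert_slice_t φ hφs x).differentiable (by simp))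
    (fun t => (pert_slice_x φ hφs t).continuous)
    (fun t ht x => (hBφ t ht x).1)
    ((abs_nonneg _).trans (hK 0 ⟨le_rfl, hT.le⟩ 0)) hK
    (fun t ht => ⟨(hlim t ht).1, (hlim t ht).2.1⟩)
    (fun τ => c₂ * G τ) (fun t ht => mul_nonneg hc2.le (hG0 t ht.1))
    (fun t ht => (hGi t ht.1).const_mul c₂)
    (by
      intro t ht x hx
      have hcont := (pert_slice_x φ hφs t).continuous
      have hux := hUx t ht.1 x
      constructor
      · intro hpos
        have hm : ∀ y, φ t y ≤ φ t x := fun y =>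
          (le_abs_self _).trans ((hx y).trans_eq (abs_of_pos hpos))
        have hd0 : deriv (φ t) x = 0 :=
          IsLocalMax.deriv_eq_zero (Filter.Eventually.of_forall hm)
        have hd2 := pert_second_deriv (φ t) hcont x hm
        have hk := hkey t ht x
        rw [hd0, add_zero] at hk
        have hff : deriv f (U t x) < deriv f (U t x + φ t x) := hfmono (by linarith)
        have hs := hσb (deriv (U t) x)
        have hg := (abs_le.1 (hσG t ht.1 x (deriv (U t) x))).2
        rw [hk]
        nlinarith [mul_nonneg hs.1 (neg_nonneg.2 hd2), mul_pos hux (sub_pos.2 hff)]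
      · intro hneg
        have hm : ∀ y, -φ t y ≤ -φ t x := fun y =>
          (neg_le_abs _).trans ((hx y).trans_eq (abs_of_neg hneg))
        have hd0 : deriv (φ t) x = 0 :=
          IsLocalMin.deriv_eq_zero (Filter.Eventually.of_forall fun y => neg_le_neg_iff.1 (hm y))
        have hd2 : 0 ≤ deriv (deriv (φ t)) x := by
          have h := pert_second_deriv (fun y => -φ t y) hcont.neg x hm
          have e : deriv (fun y => -φ t y) = fun y => -deriv (φ t) y := by
            funext y; exact (hφd t y).neg.deriv
          rw [e, (hφdd t x).fun_neg.deriv] at h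
          linarith
        have hk := hkey t ht x
        rw [hd0, add_zero] at hk
        have hff : deriv f (U t x + φ t x) < deriv f (U t x) := hfmono (by linarith)
        have hs := hσb (deriv (U t) x)
        have hg := (abs_le.1 (hσG t ht.1 x (deriv (U t) x))).1
        rw [hk]
        nlinarith [mul_nonneg hs.1 hd2, mul_pos hux (sub_pos.2 hff)])
  have hfirst : ∀ t ∈ Icc (0 : ℝ) T, ∀ x : ℝ,
      |φ t x| ≤ (⨆ y : ℝ, |φ 0 y|) + c₂ * ∫ τ in (0:ℝ)..t, G τ := by
    intro t ht x
    have h := hmain t ht x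
    rwa [intervalIntegral.integral_const_mul] at h
  refine ⟨hfirst, ?_⟩
  intro t ht x
  obtain ⟨hi, hv⟩ := pert_decay_integral CU t hCU.le ht.1
  have hle : ∫ τ in (0:ℝ)..t, G τ ≤ 8 * CU :=
    (intervalIntegral.integral_mono_on ht.1 (hGi t ht.1) hi
      (fun s hs => hGle s hs.1)).trans hv
  have h := hfirst t ht x
  nlinarith [mul_le_mul_of_nonneg_left hle hc2.le]
end

section
/- In the setting below, for every M > 0 there exists a constant C₀ > 0, depending only on p, c₁, c₂, C_U, u₋, u₊, f and M (and not on T), such that whenever ‖φ(0,·)‖_{L²} + sup_{x∈ℝ}|φ(0,x)| ≤ M, then for all t ∈ [0,T]: ‖φ(t)‖²_{L²} + ∫₀^t ∫_ℝ φ(τ,x)²·∂ₓU(τ,x) dx dτ + ∫₀^t ∫_ℝ (1+(∂ₓφ(τ,x))²)^{(p−1)/2}·(∂ₓφ(τ,x))² dx dτ ≤ C₀. -/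
open MeasureTheory Filter Set intervalIntegral

/-! ### Partial derivatives of smooth functions of two variables -/

lemma aux_hasDeriv_curve {G : ℝ → ℝ → ℝ}
    (h : ContDiff ℝ (⊤ : ℕ∞) (fun q : ℝ × ℝ => G q.1 q.2)) (t x a s : ℝ) :
    HasDerivAt (fun s => G (t + s) (x + a * s))
      (fderiv ℝ (fun q : ℝ × ℝ => G q.1 q.2) (t + s, x + a * s) (1, a)) s := by
  have h1 : HasFDerivAt (fun q : ℝ × ℝ => G q.1 q.2)
      (fderiv ℝ (fun q : ℝ × ℝ => G q.1 q.2) (t + s, x + a * s)) (t + s, x + a * s) :=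
    (h.differentiable (by simp)).differentiableAt.hasFDerivAt
  have h2 : HasDerivAt (fun s : ℝ => (t + s, x + a * s)) ((1 : ℝ), a) s := by
    have e1 : HasDerivAt (fun s : ℝ => t + s) 1 s := (hasDerivAt_id s).const_add t
    have e2 : HasDerivAt (fun s : ℝ => x + a * s) a s := by
      simpa using ((hasDerivAt_id s).const_mul a).const_add x
    exact e1.prodMk e2
  exact h1.comp_hasDerivAt s h2

lemma aux_hasDeriv_x {G : ℝ → ℝ → ℝ}
    (h : ContDiff ℝ (⊤ : ℕ∞) (fun q : ℝ × ℝ => G q.1 q.2)) (t x : ℝ) :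
    HasDerivAt (G t) (fderiv ℝ (fun q : ℝ × ℝ => G q.1 q.2) (t, x) (0, 1)) x := by
  have h1 : HasFDerivAt (fun q : ℝ × ℝ => G q.1 q.2)
      (fderiv ℝ (fun q : ℝ × ℝ => G q.1 q.2) (t, x)) (t, x) :=
    (h.differentiable (by simp)).differentiableAt.hasFDerivAt
  have h2 : HasDerivAt (fun y : ℝ => (t, y)) ((0 : ℝ), (1 : ℝ)) x :=
    (hasDerivAt_const x t).prodMk (hasDerivAt_id x)
  exact h1.comp_hasDerivAt x h2

lemma aux_hasDeriv_t {G : ℝ → ℝ → ℝ}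
    (h : ContDiff ℝ (⊤ : ℕ∞) (fun q : ℝ × ℝ => G q.1 q.2)) (t x : ℝ) :
    HasDerivAt (fun s => G s x) (fderiv ℝ (fun q : ℝ × ℝ => G q.1 q.2) (t, x) (1, 0)) t := by
  have h1 : HasFDerivAt (fun q : ℝ × ℝ => G q.1 q.2)
      (fderiv ℝ (fun q : ℝ × ℝ => G q.1 q.2) (t, x)) (t, x) :=
    (h.differentiable (by simp)).differentiableAt.hasFDerivAt
  have h2 : HasDerivAt (fun y : ℝ => (y, x)) ((1 : ℝ), (0 : ℝ)) t :=
    (hasDerivAt_id t).prodMk (hasDerivAt_const t x)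
  exact h1.comp_hasDerivAt t h2

lemma aux_hd_x {G : ℝ → ℝ → ℝ}
    (h : ContDiff ℝ (⊤ : ℕ∞) (fun q : ℝ × ℝ => G q.1 q.2)) (t x : ℝ) :
    HasDerivAt (G t) (deriv (G t) x) x :=
  (aux_hasDeriv_x h t x).differentiableAt.hasDerivAt

lemma aux_hd_t {G : ℝ → ℝ → ℝ}
    (h : ContDiff ℝ (⊤ : ℕ∞) (fun q : ℝ × ℝ => G q.1 q.2)) (t x : ℝ) :
    HasDerivAt (fun s => G s x) (deriv (fun s => G s x) t) t :=
  (aux_hasDeriv_t h t x).differentiableAt.hasDerivAt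

/-- chain rule along a straight line -/
lemma aux_curve {G : ℝ → ℝ → ℝ}
    (h : ContDiff ℝ (⊤ : ℕ∞) (fun q : ℝ × ℝ => G q.1 q.2)) (t x a s : ℝ) :
    HasDerivAt (fun s => G (t + s) (x + a * s))
      (deriv (fun r => G r (x + a * s)) (t + s) + a * deriv (G (t + s)) (x + a * s)) s := by
  have := aux_hasDeriv_curve h t x a s
  rw [(aux_hasDeriv_t h _ _).deriv, (aux_hasDeriv_x h _ _).deriv]
  convert this using 1
  have e : ((1 : ℝ), a) = (1, 0) + a • ((0 : ℝ), (1 : ℝ)) := by simp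
  rw [e, map_add, map_smul, smul_eq_mul]

lemma aux_cd_x {G : ℝ → ℝ → ℝ}
    (h : ContDiff ℝ (⊤ : ℕ∞) (fun q : ℝ × ℝ => G q.1 q.2)) :
    ContDiff ℝ (⊤ : ℕ∞) (fun q : ℝ × ℝ => deriv (G q.1) q.2) := by
  have : (fun q : ℝ × ℝ => deriv (G q.1) q.2)
      = fun q => fderiv ℝ (fun q : ℝ × ℝ => G q.1 q.2) q (0, 1) := by
    funext q
    exact (aux_hasDeriv_x h q.1 q.2).deriv
  rw [this]
  exact (h.fderiv_right (m := (⊤ : ℕ∞)) (by simp)).clm_apply contDiff_const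

lemma aux_cd_t {G : ℝ → ℝ → ℝ}
    (h : ContDiff ℝ (⊤ : ℕ∞) (fun q : ℝ × ℝ => G q.1 q.2)) :
    ContDiff ℝ (⊤ : ℕ∞) (fun q : ℝ × ℝ => deriv (fun s => G s q.2) q.1) := by
  have : (fun q : ℝ × ℝ => deriv (fun s => G s q.2) q.1)
      = fun q => fderiv ℝ (fun q : ℝ × ℝ => G q.1 q.2) q (1, 0) := by
    funext q
    exact (aux_hasDeriv_t h q.1 q.2).deriv
  rw [this]
  exact (h.fderiv_right (m := (⊤ : ℕ∞)) (by simp)).clm_apply contDiff_const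

lemma aux_symm {G : ℝ → ℝ → ℝ}
    (h : ContDiff ℝ (⊤ : ℕ∞) (fun q : ℝ × ℝ => G q.1 q.2)) (t x : ℝ) :
    deriv (fun s => deriv (G s) x) t = deriv (fun y => deriv (fun s => G s y) t) x := by
  set F : ℝ × ℝ → ℝ := fun q : ℝ × ℝ => G q.1 q.2 with hF
  have hsym : IsSymmSndFDerivAt ℝ F (t, x) := by
    apply (h.contDiffAt (x := (t, x))).isSymmSndFDerivAt
    simp only [minSmoothness_of_isRCLikeNormedField]
    exact WithTop.coe_le_coe.2 (le_top : (2 : ℕ∞) ≤ ⊤)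
  have h' : ContDiff ℝ (⊤ : ℕ∞) (fderiv ℝ F) := h.fderiv_right (m := (⊤ : ℕ∞)) (by simp)
  have hd : HasFDerivAt (fderiv ℝ F) (fderiv ℝ (fderiv ℝ F) (t, x)) (t, x) :=
    (h'.differentiable (by simp)).differentiableAt.hasFDerivAt
  have e1 : HasDerivAt (fun s => deriv (G s) x) (fderiv ℝ (fderiv ℝ F) (t, x) (1, 0) (0, 1)) t := by
    have : (fun s => deriv (G s) x) = fun s => fderiv ℝ F (s, x) (0, 1) := by
      funext s; exact (aux_hasDeriv_x h s x).deriv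
    rw [this]
    have h2 : HasDerivAt (fun y : ℝ => (y, x)) ((1 : ℝ), (0 : ℝ)) t :=
      (hasDerivAt_id t).prodMk (hasDerivAt_const t x)
    have h3 := hd.comp_hasDerivAt t h2
    have h4 := h3.clm_apply (hasDerivAt_const t ((0 : ℝ), (1 : ℝ)))
    simpa using h4
  have e2 : HasDerivAt (fun y => deriv (fun s => G s y) t)
      (fderiv ℝ (fderiv ℝ F) (t, x) (0, 1) (1, 0)) x := by
    have : (fun y => deriv (fun s => G s y) t) = fun y => fderiv ℝ F (t, y) (1, 0) := by
      funext s; exact (aux_hasDeriv_t h t s).deriv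
    rw [this]
    have h2 : HasDerivAt (fun y : ℝ => (t, y)) ((0 : ℝ), (1 : ℝ)) x :=
      (hasDerivAt_const x t).prodMk (hasDerivAt_id x)
    have h3 := hd.comp_hasDerivAt x h2
    have h4 := h3.clm_apply (hasDerivAt_const x ((1 : ℝ), (0 : ℝ)))
    simpa using h4
  rw [e1.deriv, e2.deriv]
  exact hsym _ _

/-- mean value theorem on an unordered interval -/
lemma aux_mvt (f f' : ℝ → ℝ) (h : ∀ x, HasDerivAt f (f' x) x) (a b : ℝ) :
    ∃ ξ ∈ uIcc a b, f b - f a = f' ξ * (b - a) := by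
  rcases lt_trichotomy a b with hab | hab | hab
  · obtain ⟨c, hc, he⟩ := exists_hasDerivAt_eq_slope f f' hab
      (fun x _ => (h x).continuousAt.continuousWithinAt) (fun x _ => h x)
    refine ⟨c, ?_, ?_⟩
    · rw [uIcc_of_le hab.le]; exact ⟨hc.1.le, hc.2.le⟩
    · rw [he]; field_simp [sub_ne_zero.2 hab.ne']
  · subst hab; exact ⟨a, by simp, by simp⟩
  · obtain ⟨c, hc, he⟩ := exists_hasDerivAt_eq_slope f f' hab
      (fun x _ => (h x).continuousAt.continuousWithinAt) (fun x _ => h x)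
    refine ⟨c, ?_, ?_⟩
    · rw [uIcc_of_ge hab.le]; exact ⟨hc.1.le, hc.2.le⟩
    · have : a - b ≠ 0 := sub_ne_zero.2 hab.ne'
      rw [he]; field_simp; ring


/-! ### Maximum principle -/

lemma aux_second_deriv_test (g g' : ℝ → ℝ) (g'' x₀ : ℝ) (h1 : ∀ x, HasDerivAt g (g' x) x)
    (h2 : HasDerivAt g' g'' x₀) (hmax : ∀ x, g x ≤ g x₀) : g' x₀ = 0 ∧ g'' ≤ 0 := by
  have hlm : IsLocalMax g x₀ := Filter.Eventually.of_forall hmax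
  have h0 : g' x₀ = 0 := hlm.hasDerivAt_eq_zero (h1 x₀)
  have hd : deriv g = g' := funext fun x => (h1 x).deriv
  refine ⟨h0, ?_⟩
  by_contra hcon
  push Not at hcon
  have hmin : IsLocalMin g x₀ := by
    apply isLocalMin_of_deriv_deriv_pos
    · rw [hd, h2.deriv]; exact hcon
    · rw [hd]; exact h0
    · exact (h1 x₀).continuousAt
  have hc : g =ᶠ[nhds x₀] fun _ => g x₀ := by
    filter_upwards [hmin] with x hx
    exact le_antisymm (hmax x) hx
  have hc' : deriv g =ᶠ[nhds x₀] deriv (fun _ => g x₀) := hc.deriv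
  have : deriv (deriv g) x₀ = 0 := by
    rw [hc'.deriv_eq]; simp
  rw [hd, h2.deriv] at this
  linarith

lemma aux_time_test (g : ℝ → ℝ) (g' T t₀ : ℝ) (h : HasDerivAt g g' t₀) (ht : t₀ ∈ Icc 0 T)
    (hpos : 0 < t₀) (hmax : ∀ t ∈ Icc 0 T, g t ≤ g t₀) : 0 ≤ g' := by
  have h1 : HasDerivWithinAt g g' (Iio t₀) t₀ := h.hasDerivWithinAt
  rw [hasDerivWithinAt_iff_tendsto_slope' (by simp)] at h1
  refine ge_of_tendsto h1 ?_
  have : Ioo 0 t₀ ∈ nhdsWithin t₀ (Iio t₀) := Ioo_mem_nhdsLT hpos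
  filter_upwards [this] with s hs
  rw [slope_def_field]
  have := hmax s ⟨hs.1.le, hs.2.le.trans ht.2⟩
  exact div_nonneg_of_nonpos (by linarith) (by linarith [hs.2])

lemma aux_max_principle (T : ℝ) (hT : 0 < T) (u : ℝ → ℝ → ℝ)
    (hu : ContDiff ℝ (⊤ : ℕ∞) (fun q : ℝ × ℝ => u q.1 q.2))
    (a b : ℝ → ℝ → ℝ) (L c N K : ℝ)
    (ha : ∀ t ∈ Icc 0 T, ∀ x, |a t x| ≤ L)
    (hb : ∀ t ∈ Icc 0 T, ∀ x, 0 ≤ b t x ∧ b t x ≤ c)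
    (hN : ∀ t ∈ Icc 0 T, ∀ x, |u t x| ≤ N)
    (heq : ∀ t ∈ Icc 0 T, ∀ x,
      deriv (fun s => u s x) t = a t x * deriv (u t) x + b t x * deriv (deriv (u t)) x)
    (h0 : ∀ x, u 0 x ≤ K) : ∀ t ∈ Icc 0 T, ∀ x, u t x ≤ K := by
  have h0T : (0 : ℝ) ∈ Icc 0 T := ⟨le_rfl, hT.le⟩
  have hN0 : 0 ≤ N := (abs_nonneg _).trans (hN 0 h0T 0)
  have hL0 : 0 ≤ L := (abs_nonneg _).trans (ha 0 h0T 0)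
  have hc0 : 0 ≤ c := (hb 0 h0T 0).1.trans (hb 0 h0T 0).2
  -- penalised estimate
  have key : ∀ δ : ℝ, 0 < δ → ∀ t ∈ Icc 0 T, ∀ x,
      u t x ≤ K + (2 * L * Real.sqrt (2 * N * δ) + 2 * c * δ + δ) * t + δ * x ^ 2 := by
    intro δ hδ
    set ε := 2 * L * Real.sqrt (2 * N * δ) + 2 * c * δ + δ with hε
    set v : ℝ × ℝ → ℝ := fun q => u q.1 q.2 - ε * q.1 - δ * q.2 ^ 2 with hv
    have hε0 : 0 ≤ ε := by positivity
    have hvc : Continuous v := by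
      have := hu.continuous
      fun_prop
    set R := 2 * N / δ + 1 with hR
    have hR1 : 1 ≤ R := by
      have : 0 ≤ 2 * N / δ := by positivity
      linarith
    have hRδ : 2 * N < δ * R := by
      rw [hR, mul_add, mul_div_cancel₀ _ hδ.ne']; linarith
    have hcomp : IsCompact (Icc (0 : ℝ) T ×ˢ Icc (-R) R) := isCompact_Icc.prod isCompact_Icc
    have hmem0 : ((0 : ℝ), (0 : ℝ)) ∈ Icc (0 : ℝ) T ×ˢ Icc (-R) R :=
      ⟨h0T, by constructor <;> simp <;> linarith⟩
    obtain ⟨⟨t₀, x₀⟩, hm, hmax⟩ := hcomp.exists_isMaxOn ⟨_, hmem0⟩ hvc.continuousOn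
    have hmax1 : ∀ q ∈ Icc (0 : ℝ) T ×ˢ Icc (-R) R, v q ≤ v (t₀, x₀) := hmax
    have ht₀ : t₀ ∈ Icc 0 T := hm.1
    have hv0 := hmax1 _ hmem0
    have hv0' : -N ≤ v (t₀, x₀) := by
      refine le_trans ?_ hv0
      have := (abs_le.1 (hN 0 h0T 0)).1
      simp [hv]; exact this
    have hglob : ∀ t ∈ Icc 0 T, ∀ x, v (t, x) ≤ v (t₀, x₀) := by
      intro t ht x
      by_cases hx : x ∈ Icc (-R) R
      · exact hmax1 (t, x) ⟨ht, hx⟩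
      · have hx' : R < |x| := by
          by_contra hcon
          push Not at hcon
          exact hx (abs_le.1 hcon)
        have hx2 : δ * R ≤ δ * x ^ 2 := by
          apply mul_le_mul_of_nonneg_left _ hδ.le
          rw [← sq_abs]; nlinarith
        have h1 := (abs_le.1 (hN t ht x)).2
        have h2 : 0 ≤ ε * t := mul_nonneg hε0 ht.1
        have : v (t, x) ≤ -N := by simp only [hv]; linarith
        linarith
    have hx₀ : δ * x₀ ^ 2 ≤ 2 * N := by
      have h1 := (abs_le.1 (hN t₀ ht₀ x₀)).2
      have h2 : 0 ≤ ε * t₀ := mul_nonneg hε0 ht₀.1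
      simp only [hv] at hv0'; linarith
    have ht0 : t₀ = 0 := by
      by_contra hne
      have hpos : 0 < t₀ := lt_of_le_of_ne ht₀.1 (Ne.symm hne)
      -- time derivative
      have hdt : HasDerivAt (fun s => v (s, x₀)) (deriv (fun s => u s x₀) t₀ - ε) t₀ := by
        have h1 := aux_hd_t hu t₀ x₀
        have h2 : HasDerivAt (fun s : ℝ => ε * s) ε t₀ := by
          simpa using (hasDerivAt_id t₀).const_mul ε
        exact (h1.sub h2).sub_const (δ * x₀ ^ 2)
      have hdt0 := aux_time_test _ _ T t₀ hdt ht₀ hpos (fun t ht => hglob t ht x₀)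
      -- space derivative
      have hdx : ∀ x, HasDerivAt (fun y => v (t₀, y)) (deriv (u t₀) x - 2 * δ * x) x := by
        intro x
        have h1 := aux_hd_x hu t₀ x
        have h2 : HasDerivAt (fun y : ℝ => δ * y ^ 2) (2 * δ * x) x := by
          have := (hasDerivAt_pow 2 x).const_mul δ
          refine this.congr_deriv ?_
          norm_num; ring
        exact (h1.sub_const (ε * t₀)).sub h2
      have hdxx : HasDerivAt (fun x => deriv (u t₀) x - 2 * δ * x)
          (deriv (deriv (u t₀)) x₀ - 2 * δ) x₀ := by
        have h1 := aux_hd_x (G := fun t => deriv (u t)) (aux_cd_x hu) t₀ x₀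
        have h2 : HasDerivAt (fun s : ℝ => 2 * δ * s) (2 * δ) x₀ := by
          simpa using (hasDerivAt_id x₀).const_mul (2 * δ)
        exact h1.sub h2
      obtain ⟨hx1, hx2⟩ := aux_second_deriv_test _ _ _ x₀ hdx hdxx (fun x => hglob t₀ ht₀ x)
      have hE := heq t₀ ht₀ x₀
      have hux : deriv (u t₀) x₀ = 2 * δ * x₀ := by linarith
      have hbb := hb t₀ ht₀ x₀
      have haa := ha t₀ ht₀ x₀
      have hsq : δ * |x₀| ≤ Real.sqrt (2 * N * δ) := by
        apply Real.le_sqrt_of_sq_le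
        rw [mul_pow, sq_abs]
        nlinarith
      have t1 : a t₀ x₀ * deriv (u t₀) x₀ ≤ 2 * L * Real.sqrt (2 * N * δ) := by
        rw [hux]
        have e1 : a t₀ x₀ * (2 * δ * x₀) ≤ |a t₀ x₀| * (2 * (δ * |x₀|)) := by
          have := le_abs_self (a t₀ x₀ * (2 * δ * x₀))
          rw [abs_mul, abs_mul, abs_mul, abs_of_pos hδ, abs_two] at this
          linarith
        have e2 : |a t₀ x₀| * (2 * (δ * |x₀|)) ≤ L * (2 * Real.sqrt (2 * N * δ)) := by
          gcongr
        linarith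
      have t2 : b t₀ x₀ * deriv (deriv (u t₀)) x₀ ≤ c * (2 * δ) := by
        have e1 : b t₀ x₀ * deriv (deriv (u t₀)) x₀ ≤ b t₀ x₀ * (2 * δ) :=
          mul_le_mul_of_nonneg_left (by linarith) hbb.1
        have e2 : b t₀ x₀ * (2 * δ) ≤ c * (2 * δ) :=
          mul_le_mul_of_nonneg_right hbb.2 (by linarith)
        linarith
      have : deriv (fun s => u s x₀) t₀ < ε := by rw [hE, hε]; linarith
      linarith
    intro t ht x
    have h1 := hglob t ht x
    rw [ht0] at h1
    have h2 := h0 x₀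
    have h3 : 0 ≤ δ * x₀ ^ 2 := by positivity
    simp only [hv] at h1
    linarith
  intro t ht x
  have hlim : Tendsto (fun δ : ℝ =>
      K + (2 * L * Real.sqrt (2 * N * δ) + 2 * c * δ + δ) * t + δ * x ^ 2)
      (nhdsWithin 0 (Ioi 0)) (nhds K) := by
    have hc : Continuous (fun δ : ℝ =>
      K + (2 * L * Real.sqrt (2 * N * δ) + 2 * c * δ + δ) * t + δ * x ^ 2) := by fun_prop
    have := (hc.tendsto 0).mono_left (nhdsWithin_le_nhds (s := Ioi 0))
    simpa using this
  refine ge_of_tendsto hlim ?_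
  filter_upwards [self_mem_nhdsWithin] with δ hδ
  exact key δ hδ t ht x


/-! ### Square integrability of the second derivative of the rarefaction wave -/

lemma aux_char (f : ℝ → ℝ) (hf : ContDiff ℝ (⊤ : ℕ∞) f) (um up CU : ℝ) (hCU : 0 < CU)
    (U : ℝ → ℝ → ℝ) (hU : ContDiff ℝ (⊤ : ℕ∞) (fun q : ℝ × ℝ => U q.1 q.2))
    (hconv : ∀ u : ℝ, 0 < deriv (deriv f) u)
    (heq : ∀ t : ℝ, 0 ≤ t → ∀ x : ℝ,
        deriv (fun s => U s x) t + deriv (fun y => f (U t y)) x = 0)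
    (hran : ∀ t : ℝ, 0 ≤ t → ∀ x : ℝ, um < U t x ∧ U t x < up)
    (hpos : ∀ t : ℝ, 0 ≤ t → ∀ x : ℝ, 0 < deriv (U t) x)
    (hux : ∀ t : ℝ, 0 ≤ t → ∀ x : ℝ, deriv (U t) x ≤ CU * (1 + t)⁻¹)
    (huxx : ∀ t : ℝ, 0 ≤ t → ∀ x : ℝ, |deriv (deriv (U t)) x| ≤ CU * (1 + t) ^ (-(9 : ℝ) / 8))
    (t x : ℝ) (ht : 0 ≤ t) :
    |deriv (deriv (U t)) x| ≤ |deriv (deriv (deriv f)) (U t x)| * deriv (U t) x ^ 2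
      + (1 + deriv (deriv f) (U t x)) ^ 3 * (CU * deriv (U t) x ^ ((9 : ℝ) / 8)) := by
  -- derivatives of `f`
  have hf1 : ContDiff ℝ (⊤ : ℕ∞) (deriv f) := (contDiff_infty_iff_deriv.1 hf).2
  have hf2 : ContDiff ℝ (⊤ : ℕ∞) (deriv (deriv f)) := (contDiff_infty_iff_deriv.1 hf1).2
  have df0 : ∀ u, HasDerivAt f (deriv f u) u := fun u =>
    (hf.differentiable (by simp)).differentiableAt.hasDerivAt
  have df1 : ∀ u, HasDerivAt (deriv f) (deriv (deriv f) u) u := fun u =>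
    (hf1.differentiable (by simp)).differentiableAt.hasDerivAt
  have df2 : ∀ u, HasDerivAt (deriv (deriv f)) (deriv (deriv (deriv f)) u) u := fun u =>
    (hf2.differentiable (by simp)).differentiableAt.hasDerivAt
  have hUx := aux_cd_x hU
  have hUxx := aux_cd_x (G := fun t => deriv (U t)) hUx
  -- evolution equations
  have E0 : ∀ t : ℝ, 0 ≤ t → ∀ x, deriv (fun s => U s x) t = - (deriv f (U t x) * deriv (U t) x) := by
    intro t ht x
    have h1 := heq t ht x
    have h2 : HasDerivAt (fun y => f (U t y)) (deriv f (U t x) * deriv (U t) x) x :=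
      (df0 _).comp x (aux_hd_x hU t x)
    rw [h2.deriv] at h1
    linarith
  have E1 : ∀ t : ℝ, 0 ≤ t → ∀ x, deriv (fun s => deriv (U s) x) t
      = - (deriv (deriv f) (U t x) * deriv (U t) x ^ 2
          + deriv f (U t x) * deriv (deriv (U t)) x) := by
    intro t ht x
    rw [aux_symm hU]
    have : (fun y => deriv (fun s => U s y) t) = fun y => - (deriv f (U t y) * deriv (U t) y) := by
      funext y; exact E0 t ht y
    rw [this]
    have h1 : HasDerivAt (fun y => deriv f (U t y)) (deriv (deriv f) (U t x) * deriv (U t) x) x :=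
      (df1 _).comp x (aux_hd_x hU t x)
    have h2 := (h1.mul (aux_hd_x (G := fun t => deriv (U t)) hUx t x)).neg
    refine (HasDerivAt.deriv h2).trans ?_
    ring
  have E2 : ∀ t : ℝ, 0 ≤ t → ∀ x, deriv (fun s => deriv (deriv (U s)) x) t
      = - (deriv (deriv (deriv f)) (U t x) * deriv (U t) x ^ 3
          + 3 * deriv (deriv f) (U t x) * deriv (U t) x * deriv (deriv (U t)) x
          + deriv f (U t x) * deriv (deriv (deriv (U t))) x) := by
    intro t ht x
    have hs := aux_symm (G := fun t => deriv (U t)) hUx t x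
    rw [hs]
    have : (fun y => deriv (fun s => deriv (U s) y) t)
        = fun y => - (deriv (deriv f) (U t y) * deriv (U t) y ^ 2
          + deriv f (U t y) * deriv (deriv (U t)) y) := by
      funext y; exact E1 t ht y
    rw [this]
    have h1 : HasDerivAt (fun y => deriv f (U t y)) (deriv (deriv f) (U t x) * deriv (U t) x) x :=
      (df1 _).comp x (aux_hd_x hU t x)
    have h2 : HasDerivAt (fun y => deriv (deriv f) (U t y))
        (deriv (deriv (deriv f)) (U t x) * deriv (U t) x) x :=
      (df2 _).comp x (aux_hd_x hU t x)
    have h3 := ((h2.mul ((aux_hd_x (G := fun t => deriv (U t)) hUx t x).pow 2)).add (h1.mul (aux_hd_x (G := fun t => deriv (deriv (U t))) hUxx t x))).neg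
    refine (HasDerivAt.deriv h3).trans ?_
    simp only [Nat.cast_ofNat, Pi.pow_apply]
    ring
  -- characteristic through (t,x)
  set u₀ := U t x with hu₀
  set a := deriv f u₀ with ha
  set k := deriv (deriv f) u₀ with hk
  set m := deriv (deriv (deriv f)) u₀ with hm
  have hconst : ∀ s : ℝ, 0 ≤ s → U (t + s) (x + a * s) = u₀ := by
    intro S hS
    obtain ⟨L, hL⟩ := (isCompact_Icc (a := um) (b := up)).exists_bound_of_continuousOn
      (f := deriv (deriv f)) hf2.continuous.continuousOn
    have hcur := aux_curve hU t x a
    have := eq_zero_of_abs_deriv_le_mul_abs_self_of_eq_zero_right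
      (f := fun s => U (t + s) (x + a * s) - u₀)
      (f' := fun s => deriv (fun r => U r (x + a * s)) (t + s)
        + a * deriv (U (t + s)) (x + a * s)) (K := L * CU) (a := 0) (b := S)
      (fun s _ => ((hcur s).sub_const u₀).continuousAt.continuousWithinAt)
      (fun s _ => ((hcur s).sub_const u₀).hasDerivWithinAt) (by simp [hu₀]) ?_ S ⟨hS, le_rfl⟩
    · linarith
    · intro s hs
      have hts : 0 ≤ t + s := add_nonneg ht hs.1
      rw [E0 _ hts]
      obtain ⟨ξ, hξ, he⟩ := aux_mvt _ _ df1 (U (t + s) (x + a * s)) u₀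
      have hξ' : ξ ∈ Icc um up := by
        have r1 := hran _ hts (x + a * s)
        have r2 := hran _ ht x
        exact (uIcc_subset_Icc ⟨r1.1.le, r1.2.le⟩ ⟨r2.1.le, r2.2.le⟩) hξ
      have hb := hL ξ hξ'
      have h1 : -(deriv f (U (t + s) (x + a * s)) * deriv (U (t + s)) (x + a * s))
          + a * deriv (U (t + s)) (x + a * s)
          = (deriv (deriv f) ξ * deriv (U (t + s)) (x + a * s))
            * (u₀ - U (t + s) (x + a * s)) := by
        have : a - deriv f (U (t + s) (x + a * s))
          = deriv (deriv f) ξ * (u₀ - U (t + s) (x + a * s)) := he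
        linear_combination deriv (U (t + s)) (x + a * s) * this
      rw [h1, norm_mul, norm_mul, ← norm_neg (u₀ - _), neg_sub]
      have h2 : ‖deriv (U (t + s)) (x + a * s)‖ ≤ CU := by
        rw [Real.norm_eq_abs, abs_of_pos (hpos _ hts _)]
        refine (hux _ hts _).trans ?_
        have : (1 + (t + s))⁻¹ ≤ 1 := inv_le_one_of_one_le₀ (by linarith)
        nlinarith
      have hL0 : 0 ≤ L := (norm_nonneg _).trans hb
      gcongr
  set z : ℝ → ℝ := fun s => deriv (U (t + s)) (x + a * s) with hz
  set y : ℝ → ℝ := fun s => deriv (deriv (U (t + s))) (x + a * s) with hy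
  have hzpos : ∀ s, 0 ≤ s → 0 < z s := fun s hs => hpos _ (add_nonneg ht hs) _
  have dz : ∀ s, 0 ≤ s → HasDerivAt z (- (k * z s ^ 2)) s := by
    intro s hs
    have h := aux_curve (G := fun t => deriv (U t)) hUx t x a s
    rw [E1 _ (add_nonneg ht hs), hconst s hs] at h
    convert h using 1
    simp only [hz]; ring
  have dy : ∀ s, 0 ≤ s → HasDerivAt y (- (m * z s ^ 3 + 3 * k * z s * y s)) s := by
    intro s hs
    have h := aux_curve (G := fun t => deriv (deriv (U t))) hUxx t x a s
    rw [E2 _ (add_nonneg ht hs), hconst s hs] at h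
    convert h using 1
    simp only [hz, hy]; ring
  have c1 : ∀ s, 0 ≤ s → (z s)⁻¹ - k * s = (z 0)⁻¹ := by
    intro S hS
    have hd : ∀ s, 0 ≤ s → HasDerivAt (fun s => (z s)⁻¹ - k * s) 0 s := by
      intro s hs
      have hne := (hzpos s hs).ne'
      have h1 := (dz s hs).inv hne
      have h2 : HasDerivAt (fun s : ℝ => k * s) k s := by
        simpa using (hasDerivAt_id s).const_mul k
      refine (h1.sub h2).congr_deriv ?_
      field_simp
      ring
    have := constant_of_has_deriv_right_zero (f := fun s => (z s)⁻¹ - k * s) (a := 0) (b := S)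
      (fun s hs => (hd s hs.1).continuousAt.continuousWithinAt)
      (fun s hs => (hd s hs.1).hasDerivWithinAt) S ⟨hS, le_rfl⟩
    simpa using this
  have c2 : ∀ s, 0 ≤ s → y s / z s ^ 3 + m * s = y 0 / z 0 ^ 3 := by
    intro S hS
    have hd : ∀ s, 0 ≤ s → HasDerivAt (fun s => y s / z s ^ 3 + m * s) 0 s := by
      intro s hs
      have hne := (hzpos s hs).ne'
      have h1 := (dy s hs).div ((dz s hs).pow 3) (pow_ne_zero 3 hne)
      have h2 : HasDerivAt (fun s : ℝ => m * s) m s := by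
        simpa using (hasDerivAt_id s).const_mul m
      refine (h1.add h2).congr_deriv ?_
      simp only [Nat.cast_ofNat, Pi.pow_apply]
      field_simp
      ring
    have := constant_of_has_deriv_right_zero (f := fun s => y s / z s ^ 3 + m * s) (a := 0) (b := S)
      (fun s hs => (hd s hs.1).continuousAt.continuousWithinAt)
      (fun s hs => (hd s hs.1).hasDerivWithinAt) S ⟨hS, le_rfl⟩
    simpa using this
  have z0 : z 0 = deriv (U t) x := by simp [hz]
  have y0 : y 0 = deriv (deriv (U t)) x := by simp [hy]
  rw [← z0, ← y0]
  have hz0 := hzpos 0 le_rfl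
  have hS : 0 ≤ (z 0)⁻¹ := (inv_pos.2 hz0).le
  have d1 := c1 _ hS
  have d2 := c2 _ hS
  have hk0 : 0 < k := hconv _
  have hzS := hzpos _ hS
  set S := (z 0)⁻¹ with hSdef
  have e1 : z S = z 0 / (1 + k) := by
    have : (z S)⁻¹ = (1 + k) / z 0 := by
      rw [div_eq_mul_inv, ← hSdef]; linarith
    rw [← inv_inv (z S), this, inv_div]
  have e2 : y 0 = (1 + k) ^ 3 * y S + m * z 0 ^ 2 := by
    rw [e1, show m * S = m * (z 0)⁻¹ from by rw [hSdef]] at d2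
    clear_value S
    have h1k : (1 + k) ≠ 0 := by positivity
    field_simp at d2
    linarith
  have e3 : |y S| ≤ CU * z 0 ^ ((9 : ℝ) / 8) := by
    have h1 := huxx (t + S) (add_nonneg ht hS) (x + a * S)
    refine h1.trans ?_
    apply mul_le_mul_of_nonneg_left _ hCU.le
    have : z 0 ^ ((9 : ℝ) / 8) = S ^ (-(9 : ℝ) / 8) := by
      rw [hSdef, Real.inv_rpow hz0.le, ← Real.rpow_neg hz0.le]; norm_num
    rw [this]
    exact Real.rpow_le_rpow_of_nonpos (inv_pos.2 hz0) (by linarith) (by norm_num)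
  rw [e2]
  refine (abs_add_le _ _).trans ?_
  rw [abs_mul, abs_mul, abs_of_pos (by positivity : 0 < (1 + k) ^ 3), abs_of_nonneg (sq_nonneg (z 0))]
  have : (1 + k) ^ 3 * |y S| ≤ (1 + k) ^ 3 * (CU * z 0 ^ ((9 : ℝ) / 8)) := by gcongr
  linarith

lemma aux_integrable_deriv (g g' : ℝ → ℝ) (a b : ℝ) (h : ∀ x, HasDerivAt g (g' x) x)
    (hc : Continuous g') (hpos : ∀ x, 0 < g' x) (hb : ∀ x, a < g x ∧ g x < b) :
    Integrable g' := by
  refine integrable_of_intervalIntegral_norm_bounded (l := atTop) (a := fun n : ℝ => -n)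
    (b := fun n : ℝ => n) (b - a) ?_ tendsto_neg_atTop_atBot tendsto_id ?_
  · intro i
    exact (hc.integrableOn_Icc).mono_set Ioc_subset_Icc_self
  · filter_upwards with i
    have : (∫ x in (-i)..i, ‖g' x‖) = g i - g (-i) := by
      rw [← integral_eq_sub_of_hasDerivAt (fun x _ => h x) (hc.intervalIntegrable _ _)]
      congr 1
      funext x
      rw [Real.norm_eq_abs, abs_of_pos (hpos x)]
    rw [this]
    linarith [(hb i).2, (hb (-i)).1]

lemma aux_Uxx_sq_integrable (f : ℝ → ℝ) (hf : ContDiff ℝ (⊤ : ℕ∞) f) (um up CU : ℝ) (hCU : 0 < CU)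
    (U : ℝ → ℝ → ℝ) (hU : ContDiff ℝ (⊤ : ℕ∞) (fun q : ℝ × ℝ => U q.1 q.2))
    (hconv : ∀ u : ℝ, 0 < deriv (deriv f) u)
    (heq : ∀ t : ℝ, 0 ≤ t → ∀ x : ℝ,
        deriv (fun s => U s x) t + deriv (fun y => f (U t y)) x = 0)
    (hran : ∀ t : ℝ, 0 ≤ t → ∀ x : ℝ, um < U t x ∧ U t x < up)
    (hpos : ∀ t : ℝ, 0 ≤ t → ∀ x : ℝ, 0 < deriv (U t) x)
    (hux : ∀ t : ℝ, 0 ≤ t → ∀ x : ℝ, deriv (U t) x ≤ CU * (1 + t)⁻¹)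
    (huxx : ∀ t : ℝ, 0 ≤ t → ∀ x : ℝ, |deriv (deriv (U t)) x| ≤ CU * (1 + t) ^ (-(9 : ℝ) / 8))
    (t : ℝ) (ht : 0 ≤ t) :
    Integrable (fun x => deriv (deriv (U t)) x ^ 2) := by
  have hf1 : ContDiff ℝ (⊤ : ℕ∞) (deriv f) := (contDiff_infty_iff_deriv.1 hf).2
  have hf2 : ContDiff ℝ (⊤ : ℕ∞) (deriv (deriv f)) := (contDiff_infty_iff_deriv.1 hf1).2
  have hf3 : ContDiff ℝ (⊤ : ℕ∞) (deriv (deriv (deriv f))) := (contDiff_infty_iff_deriv.1 hf2).2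
  have hUx := aux_cd_x hU
  have hUxx := aux_cd_x (G := fun t => deriv (U t)) hUx
  have cUx : Continuous (deriv (U t)) := hUx.continuous.comp (by fun_prop : Continuous fun x : ℝ => (t, x))
  have cUxx : Continuous (deriv (deriv (U t))) :=
    hUxx.continuous.comp (by fun_prop : Continuous fun x : ℝ => (t, x))
  have hint : Integrable (deriv (U t)) :=
    aux_integrable_deriv (U t) _ um up (aux_hd_x hU t) cUx (hpos t ht) (hran t ht)
  obtain ⟨L2, hL2⟩ := (isCompact_Icc (a := um) (b := up)).exists_bound_of_continuousOn
      (f := deriv (deriv f)) hf2.continuous.continuousOn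
  obtain ⟨L3, hL3⟩ := (isCompact_Icc (a := um) (b := up)).exists_bound_of_continuousOn
      (f := deriv (deriv (deriv f))) hf3.continuous.continuousOn
  -- |U_xx| ≤ C * U_x, with C = L3 * CU + (1+L2)^3 * CU * CU^(1/8)
  set C := L3 * CU + (1 + L2) ^ 3 * (CU * CU ^ ((1 : ℝ) / 8)) with hC
  refine Integrable.mono' (hint.const_mul (CU * C)) (cUxx.pow 2).aestronglyMeasurable ?_
  filter_upwards with x
  have hr := hran t ht x
  have hI : U t x ∈ Icc um up := ⟨hr.1.le, hr.2.le⟩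
  have b2 := hL2 _ hI
  have b3 := hL3 _ hI
  have hz0 := hpos t ht x
  have hz1 : deriv (U t) x ≤ CU := by
    refine (hux t ht x).trans ?_
    have : (1 + t)⁻¹ ≤ 1 := inv_le_one_of_one_le₀ (by linarith)
    nlinarith
  have key := aux_char f hf um up CU hCU U hU hconv heq hran hpos hux huxx t x ht
  set z := deriv (U t) x with hz
  have h98 : z ^ ((9 : ℝ) / 8) ≤ z * CU ^ ((1 : ℝ) / 8) := by
    have : (9 : ℝ) / 8 = 1 + 1 / 8 := by norm_num
    rw [this, Real.rpow_add hz0, Real.rpow_one]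
    apply mul_le_mul_of_nonneg_left _ hz0.le
    exact Real.rpow_le_rpow hz0.le hz1 (by norm_num)
  have hk := hconv (U t x)
  rw [Real.norm_eq_abs, abs_of_pos hk] at b2
  rw [Real.norm_eq_abs] at b3
  have hL3' : 0 ≤ L3 := (abs_nonneg _).trans b3
  have hb1 : |deriv (deriv (U t)) x| ≤ C * z := by
    refine key.trans ?_
    have i1 : |deriv (deriv (deriv f)) (U t x)| * z ^ 2 ≤ L3 * (CU * z) := by
      apply mul_le_mul b3 _ (by positivity) hL3'
      nlinarith
    have hL2' : 0 ≤ 1 + L2 := by linarith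
    have i2 : (1 + deriv (deriv f) (U t x)) ^ 3 * (CU * z ^ ((9 : ℝ) / 8))
        ≤ (1 + L2) ^ 3 * (CU * (z * CU ^ ((1 : ℝ) / 8))) := by
      gcongr
    rw [hC]; linarith
  have hb2 : |deriv (deriv (U t)) x| ≤ CU := by
    refine (huxx t ht x).trans ?_
    have : (1 + t) ^ (-(9 : ℝ) / 8) ≤ 1 :=
      Real.rpow_le_one_of_one_le_of_nonpos (by linarith) (by norm_num)
    nlinarith
  rw [Real.norm_eq_abs, abs_of_nonneg (sq_nonneg _), ← sq_abs, sq]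
  calc |deriv (deriv (U t)) x| * |deriv (deriv (U t)) x| ≤ CU * (C * z) :=
        mul_le_mul hb2 hb1 (abs_nonneg _) hCU.le
    _ = CU * C * z := by ring


/-! ### The spatial energy inequality -/

lemma aux_cauchy_schwarz (g h : ℝ → ℝ) (hg : Continuous g) (hh : Continuous h)
    (ig : Integrable (fun x => g x ^ 2)) (ih : Integrable (fun x => h x ^ 2)) :
    (∫ x, |g x| * |h x|) ≤ (∫ x, g x ^ 2) ^ ((1 : ℝ) / 2) * (∫ x, h x ^ 2) ^ ((1 : ℝ) / 2) := by
  have m1 : MemLp (fun x => |g x|) (ENNReal.ofReal 2) := by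
    have : MemLp (fun x => |g x|) 2 := by
      rw [memLp_two_iff_integrable_sq hg.abs.aestronglyMeasurable]
      simpa [sq_abs] using ig
    simpa using this
  have m2 : MemLp (fun x => |h x|) (ENNReal.ofReal 2) := by
    have : MemLp (fun x => |h x|) 2 := by
      rw [memLp_two_iff_integrable_sq hh.abs.aestronglyMeasurable]
      simpa [sq_abs] using ih
    simpa using this
  have := integral_mul_le_Lp_mul_Lq_of_nonneg (Real.HolderConjugate.two_two)
    (Filter.Eventually.of_forall fun x => abs_nonneg (g x))
    (Filter.Eventually.of_forall fun x => abs_nonneg (h x)) m1 m2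
  simpa [sq_abs] using this

lemma aux_taylor (f : ℝ → ℝ) (A Bd m L2 : ℝ)
    (df0 : ∀ u, HasDerivAt f (deriv f u) u)
    (df1 : ∀ u, HasDerivAt (deriv f) (deriv (deriv f) u) u)
    (hm : ∀ u ∈ Icc A Bd, m ≤ deriv (deriv f) u)
    (hL2 : ∀ u ∈ Icc A Bd, |deriv (deriv f) u| ≤ L2)
    (a b : ℝ) (ha : a ∈ Icc A Bd) (hb : b ∈ Icc A Bd) :
    m / 2 * (b - a) ^ 2 ≤ f b - f a - deriv f a * (b - a) ∧
    |f b - f a - deriv f a * (b - a)| ≤ L2 * (b - a) ^ 2 := by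
  constructor
  · -- apply the mean value theorem to f(s) - m/2 (s-a)^2 - f'(a) (s-a)
    have hd : ∀ s, HasDerivAt (fun s => f s - deriv f a * (s - a) - m / 2 * (s - a) ^ 2)
        (deriv f s - deriv f a - m * (s - a)) s := by
      intro s
      have h1 : HasDerivAt (fun s : ℝ => s - a) 1 s := (hasDerivAt_id s).sub_const a
      have h2 := ((df0 s).sub (h1.const_mul (deriv f a))).sub ((h1.pow 2).const_mul (m / 2))
      refine h2.congr_deriv ?_
      norm_num; ring
    obtain ⟨ξ, hξ, he⟩ := aux_mvt _ _ hd a b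
    have hξI : ξ ∈ Icc A Bd := uIcc_subset_Icc ha hb hξ
    obtain ⟨η, hη, he2⟩ := aux_mvt _ _ df1 a ξ
    have hηI : η ∈ Icc A Bd := uIcc_subset_Icc ha hξI hη
    have hmη := hm η hηI
    have hsgn : 0 ≤ (ξ - a) * (b - a) := by
      rcases le_total a b with hab | hab
      · rw [uIcc_of_le hab] at hξ
        exact mul_nonneg (by linarith [hξ.1]) (by linarith)
      · rw [uIcc_of_ge hab] at hξ
        exact mul_nonneg_of_nonpos_of_nonpos (by linarith [hξ.2]) (by linarith)
    have : 0 ≤ (deriv f ξ - deriv f a - m * (ξ - a)) * (b - a) := by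
      rw [he2]
      have : (deriv (deriv f) η * (ξ - a) - m * (ξ - a)) * (b - a)
        = (deriv (deriv f) η - m) * ((ξ - a) * (b - a)) := by ring
      rw [this]
      exact mul_nonneg (by linarith) hsgn
    simp only [sub_self] at he
    nlinarith
  · obtain ⟨ξ, hξ, he⟩ := aux_mvt _ _ df0 a b
    have hξI : ξ ∈ Icc A Bd := uIcc_subset_Icc ha hb hξ
    obtain ⟨η, hη, he2⟩ := aux_mvt _ _ df1 a ξ
    have hηI : η ∈ Icc A Bd := uIcc_subset_Icc ha hξI hη
    have hb2 := hL2 η hηI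
    have : f b - f a - deriv f a * (b - a) = deriv (deriv f) η * ((ξ - a) * (b - a)) := by
      rw [he]; linear_combination (b - a) * he2
    rw [this, abs_mul]
    have h3 : |(ξ - a) * (b - a)| ≤ (b - a) ^ 2 := by
      rw [abs_mul, ← sq_abs, sq]
      apply mul_le_mul_of_nonneg_right _ (abs_nonneg _)
      exact abs_sub_left_of_mem_uIcc hξ
    exact mul_le_mul hb2 h3 (abs_nonneg _) ((abs_nonneg _).trans hb2)

lemma aux_rpow_le_one (p v : ℝ) (hp1 : p < 1) : (1 + v ^ 2) ^ ((p - 1) / 2) ≤ 1 :=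
  Real.rpow_le_one_of_one_le_of_nonpos (by nlinarith) (by linarith)

lemma aux_sigma_bd (p c₁ c₂ : ℝ) (hp1 : p < 1) (hc1 : 0 < c₁) (hc12 : c₁ ≤ c₂) (σ : ℝ → ℝ)
    (hσ : ∀ v : ℝ, c₁ * (1 + v ^ 2) ^ ((p - 1) / 2) ≤ deriv σ v ∧
        deriv σ v ≤ c₂ * (1 + v ^ 2) ^ ((p - 1) / 2)) (v : ℝ) :
    0 ≤ deriv σ v ∧ deriv σ v ≤ c₂ := by
  have h0 : 0 ≤ (1 + v ^ 2) ^ ((p - 1) / 2) := by positivity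
  have h1 := aux_rpow_le_one p v hp1
  have := hσ v
  constructor
  · exact le_trans (by positivity) this.1
  · refine this.2.trans ?_
    nlinarith

lemma aux_dissip (p c₁ c₂ CU : ℝ) (hp1 : p < 1) (hc1 : 0 < c₁) (σ : ℝ → ℝ)
    (dσ : ∀ v, HasDerivAt σ (deriv σ v) v)
    (hσ : ∀ v : ℝ, c₁ * (1 + v ^ 2) ^ ((p - 1) / 2) ≤ deriv σ v ∧
        deriv σ v ≤ c₂ * (1 + v ^ 2) ^ ((p - 1) / 2))
    (a v : ℝ) (ha : 0 < a) (ha2 : a ≤ CU) :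
    c₁ * (2 * (1 + CU ^ 2)) ^ ((p - 1) / 2) * ((1 + v ^ 2) ^ ((p - 1) / 2) * v ^ 2)
      ≤ v * (σ (a + v) - σ a) := by
  obtain ⟨ξ, hξ, he⟩ := aux_mvt _ _ dσ a (a + v)
  rw [he]
  have hx : |ξ| ≤ CU + |v| := by
    have h1 : |ξ - a| ≤ |a + v - a| := abs_sub_left_of_mem_uIcc hξ
    have h2 : |ξ| ≤ |ξ - a| + |a| := by
      have := abs_add_le (ξ - a) a
      simpa using this
    rw [add_sub_cancel_left] at h1
    rw [abs_of_pos ha] at h2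
    linarith
  have h3 : 1 + ξ ^ 2 ≤ 2 * (1 + CU ^ 2) * (1 + v ^ 2) := by
    have h4 : ξ ^ 2 ≤ (CU + |v|) ^ 2 := by
      rw [← sq_abs]; gcongr
    have h5 : |v| ^ 2 = v ^ 2 := sq_abs v
    nlinarith [sq_nonneg (CU - |v|), sq_nonneg (CU * v)]
  have h6 : (2 * (1 + CU ^ 2)) ^ ((p - 1) / 2) * (1 + v ^ 2) ^ ((p - 1) / 2)
      ≤ (1 + ξ ^ 2) ^ ((p - 1) / 2) := by
    rw [← Real.mul_rpow (by positivity) (by positivity)]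
    exact Real.rpow_le_rpow_of_nonpos (by positivity) h3 (by linarith)
  have h7 := (hσ ξ).1
  have h8 : c₁ * ((2 * (1 + CU ^ 2)) ^ ((p - 1) / 2) * (1 + v ^ 2) ^ ((p - 1) / 2)) ≤ deriv σ ξ :=
    (mul_le_mul_of_nonneg_left h6 hc1.le).trans h7
  have := mul_le_mul_of_nonneg_right h8 (sq_nonneg v)
  linarith

lemma aux_pointwise (L1 L2 c₂ CU φ φ1 φ2 V1 V2 a b s w : ℝ) (hV1 : 0 < V1)
    (hV1' : V1 ≤ CU) (ha : |a| ≤ L1) (hab : |a - b| ≤ L2 * |φ|) (hs : |s| ≤ c₂)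
    (hL2 : 0 ≤ L2)
    (hw : w = -(a * (V1 + φ1) - b * V1) + s * (V2 + φ2)) :
    |φ * w| ≤ (L2 * CU + L1 + 2 * c₂) * (φ ^ 2 + φ1 ^ 2 + φ2 ^ 2 + V2 ^ 2) := by
  have hw' : |w| ≤ L2 * |φ| * CU + L1 * |φ1| + c₂ * |V2| + c₂ * |φ2| := by
    have : w = -((a - b) * V1) + -(a * φ1) + s * V2 + s * φ2 := by rw [hw]; ring
    rw [this]
    refine (abs_add_le _ _).trans ?_
    refine (add_le_add_left (abs_add_le _ _) _).trans ?_
    refine (add_le_add_left (add_le_add_left (abs_add_le _ _) _) _).trans ?_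
    rw [abs_neg, abs_neg, abs_mul, abs_mul, abs_mul, abs_mul, abs_of_pos hV1]
    have : 0 ≤ L2 * |φ| := by positivity
    gcongr
  have hL1 : 0 ≤ L1 := (abs_nonneg _).trans ha
  have hc : 0 ≤ c₂ := (abs_nonneg _).trans hs
  have hCU : 0 ≤ CU := by linarith
  rw [abs_mul]
  have h1 : |φ| * |w| ≤ |φ| * (L2 * |φ| * CU + L1 * |φ1| + c₂ * |V2| + c₂ * |φ2|) := by gcongr
  refine h1.trans ?_
  rw [← sq_abs φ, ← sq_abs φ1, ← sq_abs φ2, ← sq_abs V2]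
  generalize |φ| = x at *
  generalize |φ1| = y at *
  generalize |φ2| = z at *
  generalize |V2| = k at *
  have e1 : x * y ≤ x ^ 2 + y ^ 2 + z ^ 2 + k ^ 2 := by
    nlinarith [sq_nonneg (x - y), sq_nonneg x, sq_nonneg y, sq_nonneg z, sq_nonneg k]
  have e2 : x * k ≤ x ^ 2 + y ^ 2 + z ^ 2 + k ^ 2 := by
    nlinarith [sq_nonneg (x - k), sq_nonneg x, sq_nonneg y, sq_nonneg z, sq_nonneg k]
  have e3 : x * z ≤ x ^ 2 + y ^ 2 + z ^ 2 + k ^ 2 := by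
    nlinarith [sq_nonneg (x - z), sq_nonneg x, sq_nonneg y, sq_nonneg z, sq_nonneg k]
  have e4 : x * x ≤ x ^ 2 + y ^ 2 + z ^ 2 + k ^ 2 := by
    nlinarith [sq_nonneg y, sq_nonneg z, sq_nonneg k]
  have f1 := mul_le_mul_of_nonneg_left e1 hL1
  have f2 := mul_le_mul_of_nonneg_left e2 hc
  have f3 := mul_le_mul_of_nonneg_left e3 hc
  have f4 := mul_le_mul_of_nonneg_left e4 (mul_nonneg hL2 hCU)
  linarith

lemma aux_spatial (p c₁ c₂ : ℝ) (hp1 : p < 1) (hc1 : 0 < c₁) (hc12 : c₁ ≤ c₂)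
    (f : ℝ → ℝ) (hf : Continuous f)
    (df0 : ∀ u, HasDerivAt f (deriv f u) u)
    (df1 : ∀ u, HasDerivAt (deriv f) (deriv (deriv f) u) u)
    (A Bd m L0 L2 CU Bφ C3 : ℝ) (hm0 : 0 < m)
    (hm : ∀ u ∈ Icc A Bd, m ≤ deriv (deriv f) u)
    (hL0 : ∀ u ∈ Icc A Bd, |f u| ≤ L0)
    (hL2 : ∀ u ∈ Icc A Bd, |deriv (deriv f) u| ≤ L2)
    (σ : ℝ → ℝ) (dσ : ∀ v, HasDerivAt σ (deriv σ v) v) (cσ : Continuous (deriv σ))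
    (hσ : ∀ v : ℝ, c₁ * (1 + v ^ 2) ^ ((p - 1) / 2) ≤ deriv σ v ∧
        deriv σ v ≤ c₂ * (1 + v ^ 2) ^ ((p - 1) / 2))
    (V V1 V2 φ φ1 φ2 w : ℝ → ℝ)
    (hV : ∀ x, HasDerivAt V (V1 x) x) (hV1 : ∀ x, HasDerivAt V1 (V2 x) x) (cV2 : Continuous V2)
    (hφ : ∀ x, HasDerivAt φ (φ1 x) x) (hφ1 : ∀ x, HasDerivAt φ1 (φ2 x) x)
    (cw : Continuous w)
    (rV : ∀ x, V x ∈ Icc A Bd) (rVφ : ∀ x, V x + φ x ∈ Icc A Bd)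
    (pV1 : ∀ x, 0 < V1 x) (bV1 : ∀ x, V1 x ≤ CU)
    (bφ1 : ∀ x, |φ1 x| ≤ Bφ)
    (iφ : Integrable (fun x => φ x ^ 2)) (iφ1 : Integrable (fun x => φ1 x ^ 2))
    (iφ2 : Integrable (fun x => φ2 x ^ 2)) (iV2 : Integrable (fun x => V2 x ^ 2))
    (lt : Tendsto φ atTop (nhds 0)) (lb : Tendsto φ atBot (nhds 0))
    (hw : ∀ x, w x = -(deriv f (V x + φ x) * (V1 x + φ1 x) - deriv f (V x) * V1 x)
      + deriv σ (V1 x + φ1 x) * (V2 x + φ2 x))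
    (hC3 : ∀ x, |φ x * w x| ≤ C3 * (φ x ^ 2 + φ1 x ^ 2 + φ2 x ^ 2 + V2 x ^ 2)) :
    (∫ x, φ x * w x) ≤ - (m / 2 * ∫ x, φ x ^ 2 * V1 x)
      - c₁ * (2 * (1 + CU ^ 2)) ^ ((p - 1) / 2)
        * (∫ x, (1 + φ1 x ^ 2) ^ ((p - 1) / 2) * φ1 x ^ 2)
      + c₂ * ((∫ x, φ x ^ 2) ^ ((1 : ℝ) / 2) * (∫ x, V2 x ^ 2) ^ ((1 : ℝ) / 2)) := by
  have hc2 : 0 < c₂ := hc1.trans_le hc12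
  have cφ : Continuous φ := continuous_iff_continuousAt.2 fun x => (hφ x).continuousAt
  have cφ1 : Continuous φ1 := continuous_iff_continuousAt.2 fun x => (hφ1 x).continuousAt
  have cV : Continuous V := continuous_iff_continuousAt.2 fun x => (hV x).continuousAt
  have cV1 : Continuous V1 := continuous_iff_continuousAt.2 fun x => (hV1 x).continuousAt
  have cf1 : Continuous (deriv f) := continuous_iff_continuousAt.2 fun x => (df1 x).continuousAt
  have cs : Continuous σ := continuous_iff_continuousAt.2 fun x => (dσ x).continuousAt
  have sb := aux_sigma_bd p c₁ c₂ hp1 hc1 hc12 σ hσ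
  set c := c₁ * (2 * (1 + CU ^ 2)) ^ ((p - 1) / 2) with hc
  set rem : ℝ → ℝ := fun x => f (V x + φ x) - f (V x) - deriv f (V x) * φ x with hrem
  set F : ℝ → ℝ := fun x => σ (V1 x + φ1 x) - σ (V1 x) with hF
  set D : ℝ → ℝ := fun x => (1 + φ1 x ^ 2) ^ ((p - 1) / 2) * φ1 x ^ 2 with hD
  -- pointwise bounds
  have prem : ∀ x, m / 2 * φ x ^ 2 ≤ rem x ∧ |rem x| ≤ L2 * φ x ^ 2 := by
    intro x
    have := aux_taylor f A Bd m L2 df0 df1 hm hL2 (V x) (V x + φ x) (rV x) (rVφ x)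
    simpa [hrem] using this
  have pF : ∀ x, |F x| ≤ c₂ * |φ1 x| := by
    intro x
    obtain ⟨ξ, hξ, he⟩ := aux_mvt _ _ dσ (V1 x) (V1 x + φ1 x)
    simp only [hF]
    rw [he, add_sub_cancel_left, abs_mul, abs_of_nonneg (sb ξ).1]
    exact mul_le_mul_of_nonneg_right (sb ξ).2 (abs_nonneg _)
  have pD : ∀ x, c * D x ≤ φ1 x * F x := fun x =>
    aux_dissip p c₁ c₂ CU hp1 hc1 σ dσ hσ (V1 x) (φ1 x) (pV1 x) (bV1 x)
  -- integrability
  have crem : Continuous rem := by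
    simp only [hrem]; fun_prop
  have cF : Continuous F := by
    simp only [hF]; fun_prop
  have cD : Continuous D := by
    simp only [hD]
    refine Continuous.mul (Continuous.rpow_const (by fun_prop) ?_) (by fun_prop)
    intro x; left; positivity
  have hL2n : 0 ≤ L2 := (abs_nonneg _).trans (hL2 _ (rV 0))
  have i1 : Integrable (fun x => φ x * w x) := by
    refine Integrable.mono' ((((iφ.add iφ1).add iφ2).add iV2).const_mul C3)
      (cφ.mul cw).aestronglyMeasurable ?_
    filter_upwards with x
    exact hC3 x
  have i2 : Integrable (fun x => rem x * V1 x) := by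
    refine Integrable.mono' (iφ.const_mul (L2 * CU)) (crem.mul cV1).aestronglyMeasurable ?_
    filter_upwards with x
    rw [norm_mul, Real.norm_eq_abs, Real.norm_eq_abs, abs_of_pos (pV1 x)]
    have := mul_le_mul (prem x).2 (bV1 x) (pV1 x).le (by positivity)
    linarith
  have i3 : Integrable (fun x => φ1 x * F x) := by
    refine Integrable.mono' (iφ1.const_mul c₂) (cφ1.mul cF).aestronglyMeasurable ?_
    filter_upwards with x
    rw [norm_mul, Real.norm_eq_abs, Real.norm_eq_abs, ← sq_abs]
    have := mul_le_mul_of_nonneg_left (pF x) (abs_nonneg (φ1 x))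
    linarith
  have i4' : Integrable (fun x => |φ x| * |V2 x|) := by
    refine Integrable.mono' (iφ.add iV2) (cφ.abs.mul cV2.abs).aestronglyMeasurable ?_
    filter_upwards with x
    rw [norm_mul, Real.norm_eq_abs, Real.norm_eq_abs, abs_abs, abs_abs]
    simp only [Pi.add_apply]
    rw [← sq_abs (φ x), ← sq_abs (V2 x)]
    nlinarith [sq_nonneg (|φ x| - |V2 x|), sq_nonneg (|φ x|), sq_nonneg (|V2 x|)]
  have p4 : ∀ x, |φ x * (deriv σ (V1 x) * V2 x)| ≤ c₂ * (|φ x| * |V2 x|) := by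
    intro x
    rw [abs_mul, abs_mul, abs_of_nonneg (sb _).1]
    have := mul_le_mul_of_nonneg_right (sb (V1 x)).2
      (mul_nonneg (abs_nonneg (φ x)) (abs_nonneg (V2 x)))
    linarith
  have i4 : Integrable (fun x => φ x * (deriv σ (V1 x) * V2 x)) := by
    refine Integrable.mono' (i4'.const_mul c₂)
      (cφ.mul ((cσ.comp cV1).mul cV2)).aestronglyMeasurable ?_
    filter_upwards with x
    exact p4 x
  have i5 : Integrable (fun x => φ x ^ 2 * V1 x) := by
    refine Integrable.mono' (iφ.const_mul CU) ((cφ.pow 2).mul cV1).aestronglyMeasurable ?_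
    filter_upwards with x
    rw [norm_mul, Real.norm_eq_abs, Real.norm_eq_abs, abs_of_pos (pV1 x), abs_of_nonneg (sq_nonneg _)]
    have := mul_le_mul_of_nonneg_left (bV1 x) (sq_nonneg (φ x))
    linarith
  have i6 : Integrable D := by
    refine Integrable.mono' iφ1 cD.aestronglyMeasurable ?_
    filter_upwards with x
    have h0 : 0 ≤ D x := by simp only [hD]; positivity
    rw [Real.norm_eq_abs, abs_of_nonneg h0]
    have := mul_le_mul_of_nonneg_right (aux_rpow_le_one p (φ1 x) hp1) (sq_nonneg (φ1 x))
    simpa [hD] using this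
  -- the exact derivative
  set Φ : ℝ → ℝ := fun u => ∫ s in (0 : ℝ)..u, f s with hΦ
  have dΦ : ∀ u, HasDerivAt Φ (f u) u := fun u =>
    (hf.integral_hasStrictDerivAt 0 u).hasDerivAt
  set R : ℝ → ℝ := fun x =>
    -(φ x * f (V x + φ x) - Φ (V x + φ x) + Φ (V x)) + φ x * F x with hR
  set R' : ℝ → ℝ := fun x =>
    φ x * w x + rem x * V1 x + φ1 x * F x - φ x * (deriv σ (V1 x) * V2 x) with hR'
  have dR : ∀ x, HasDerivAt R (R' x) x := by
    intro x
    have hVφ : HasDerivAt (fun x => V x + φ x) (V1 x + φ1 x) x := (hV x).add (hφ x)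
    have hV1φ : HasDerivAt (fun x => V1 x + φ1 x) (V2 x + φ2 x) x := (hV1 x).add (hφ1 x)
    have a1 : HasDerivAt (fun x => f (V x + φ x)) (deriv f (V x + φ x) * (V1 x + φ1 x)) x :=
      (df0 _).comp x hVφ
    have a2 : HasDerivAt (fun x => Φ (V x + φ x)) (f (V x + φ x) * (V1 x + φ1 x)) x :=
      (dΦ _).comp x hVφ
    have a3 : HasDerivAt (fun x => Φ (V x)) (f (V x) * V1 x) x := (dΦ _).comp x (hV x)
    have a4 : HasDerivAt (fun x => σ (V1 x + φ1 x)) (deriv σ (V1 x + φ1 x) * (V2 x + φ2 x)) x :=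
      (dσ _).comp x hV1φ
    have a5 : HasDerivAt (fun x => σ (V1 x)) (deriv σ (V1 x) * V2 x) x := (dσ _).comp x (hV1 x)
    have a6 := ((((hφ x).mul a1).sub a2).add a3).neg.add ((hφ x).mul (a4.sub a5))
    refine a6.congr_deriv ?_
    simp only [hR', hrem, hF, hw x, Pi.sub_apply]
    ring
  have iR' : Integrable R' := ((i1.add i2).add i3).sub i4
  have bR : ∀ x, ‖R x‖ ≤ (2 * L0 + c₂ * Bφ) * |φ x| := by
    intro x
    obtain ⟨ξ, hξ, he⟩ := aux_mvt _ _ dΦ (V x) (V x + φ x)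
    have hξI : ξ ∈ Icc A Bd := uIcc_subset_Icc (rV x) (rVφ x) hξ
    have hRx : R x = φ x * (f ξ - f (V x + φ x) + F x) := by
      rw [add_sub_cancel_left] at he
      simp only [hR]
      linear_combination he
    rw [hRx, norm_mul, Real.norm_eq_abs, Real.norm_eq_abs, mul_comm]
    apply mul_le_mul_of_nonneg_right _ (abs_nonneg _)
    have b1 := abs_le.1 (hL0 ξ hξI)
    have b2 := abs_le.1 (hL0 _ (rVφ x))
    have b3 := abs_le.1 ((pF x).trans (mul_le_mul_of_nonneg_left (bφ1 x) hc2.le))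
    rw [abs_le]
    constructor <;> linarith [b1.1, b1.2, b2.1, b2.2, b3.1, b3.2]
  have tR : ∀ l : Filter ℝ, Tendsto φ l (nhds 0) → Tendsto R l (nhds 0) := by
    intro l hl
    refine squeeze_zero_norm bR ?_
    have := (hl.abs).const_mul (2 * L0 + c₂ * Bφ)
    simpa using this
  have hzero : ∫ x, R' x = 0 := by
    rw [integral_of_hasDerivAt_of_tendsto dR iR' (tR _ lb) (tR _ lt)]; simp
  -- conclusion
  have hmono : (∫ x, φ x * w x) ≤ ∫ x, (R' x - m / 2 * (φ x ^ 2 * V1 x) - c * D x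
      + c₂ * (|φ x| * |V2 x|)) := by
    refine integral_mono i1 (((iR'.sub (i5.const_mul _)).sub (i6.const_mul _)).add
      (i4'.const_mul _)) ?_
    intro x
    have q1 := mul_le_mul_of_nonneg_right (prem x).1 (pV1 x).le
    have q2 := pD x
    have q3 := (abs_le.1 (p4 x)).2
    simp only [hR']
    linarith
  refine hmono.trans ?_
  have e := integral_add ((iR'.sub (i5.const_mul (m / 2))).sub (i6.const_mul c)) (i4'.const_mul c₂)
  have e' := integral_sub (iR'.sub (i5.const_mul (m / 2))) (i6.const_mul c)
  have e'' := integral_sub iR' (i5.const_mul (m / 2))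
  simp only [Pi.sub_apply] at e e' e''
  rw [e, e', e'', hzero, MeasureTheory.integral_const_mul, MeasureTheory.integral_const_mul,
    MeasureTheory.integral_const_mul]
  have cs := mul_le_mul_of_nonneg_left (aux_cauchy_schwarz φ V2 cφ cV2 iφ iV2) hc2.le
  linarith


/-! ### Integration in time -/

lemma aux_prod_integrable (g : ℝ → ℝ → ℝ) (hg : Continuous (Function.uncurry g)) (t B : ℝ)
    (h : ∀ τ ∈ Icc 0 t, Integrable (g τ) ∧ (∫ x, ‖g τ x‖) ≤ B) :
    Integrable (Function.uncurry g) ((volume.restrict (Ioc 0 t)).prod volume) := by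
  have hm : AEStronglyMeasurable (Function.uncurry g)
      ((volume.restrict (Ioc 0 t)).prod volume) := hg.aestronglyMeasurable
  rw [integrable_prod_iff hm]
  constructor
  · refine (ae_restrict_iff' measurableSet_Ioc).2 (Filter.Eventually.of_forall ?_)
    intro τ hτ
    exact (h τ ⟨hτ.1.le, hτ.2⟩).1
  · have hm2 : AEStronglyMeasurable (fun τ => ∫ x, ‖Function.uncurry g (τ, x)‖)
        (volume.restrict (Ioc 0 t)) := hm.norm.integral_prod_right'
    refine Integrable.mono' (integrable_const B) hm2 ?_
    refine (ae_restrict_iff' measurableSet_Ioc).2 (Filter.Eventually.of_forall ?_)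
    intro τ hτ
    rw [Real.norm_eq_abs, abs_of_nonneg (integral_nonneg fun x => norm_nonneg _)]
    exact (h τ ⟨hτ.1.le, hτ.2⟩).2

lemma aux_intervalIntegrable (g : ℝ → ℝ → ℝ) (hg : Continuous (Function.uncurry g)) (t B : ℝ)
    (ht : 0 ≤ t)
    (h : ∀ τ ∈ Icc 0 t, Integrable (g τ) ∧ (∫ x, ‖g τ x‖) ≤ B) :
    IntervalIntegrable (fun τ => ∫ x, g τ x) volume 0 t := by
  rw [intervalIntegrable_iff_integrableOn_Ioc_of_le ht]
  exact (aux_prod_integrable g hg t B h).integral_prod_left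

lemma aux_energy_identity (φ : ℝ → ℝ → ℝ)
    (hφ : ContDiff ℝ (⊤ : ℕ∞) (fun q : ℝ × ℝ => φ q.1 q.2)) (t B : ℝ) (ht : 0 ≤ t)
    (i0 : ∀ τ ∈ Icc 0 t, Integrable (fun x => φ τ x ^ 2))
    (h : ∀ τ ∈ Icc 0 t, Integrable (fun x => φ τ x * deriv (fun s => φ s x) τ) ∧
      (∫ x, ‖φ τ x * deriv (fun s => φ s x) τ‖) ≤ B) :
    (∫ x, φ t x ^ 2) - (∫ x, φ 0 x ^ 2)
      = ∫ τ in (0 : ℝ)..t, 2 * ∫ x, φ τ x * deriv (fun s => φ s x) τ := by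
  have hc : Continuous (Function.uncurry fun τ x => φ τ x * deriv (fun s => φ s x) τ) :=
    hφ.continuous.mul (aux_cd_t hφ).continuous
  have hint := aux_prod_integrable _ hc t B h
  rw [intervalIntegral.integral_const_mul, intervalIntegral.integral_of_le ht,
    integral_integral_swap hint,
    ← integral_sub (i0 t ⟨ht, le_rfl⟩) (i0 0 ⟨le_rfl, ht⟩), ← MeasureTheory.integral_const_mul]
  congr 1
  funext x
  rw [← intervalIntegral.integral_of_le ht, ← intervalIntegral.integral_const_mul]
  have hd : ∀ τ ∈ uIcc 0 t, HasDerivAt (fun s => φ s x ^ 2)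
      (2 * (φ τ x * deriv (fun s => φ s x) τ)) τ := by
    intro τ _
    refine ((aux_hd_t hφ τ x).pow 2).congr_deriv ?_
    norm_num; ring
  have hcx : Continuous fun τ => 2 * (φ τ x * deriv (fun s => φ s x) τ) :=
    continuous_const.mul (hc.comp (by fun_prop : Continuous fun τ : ℝ => (τ, x)))
  rw [integral_eq_sub_of_hasDerivAt hd (hcx.intervalIntegrable _ _)]

lemma aux_time_weight (t : ℝ) (ht : 0 ≤ t) :
    IntervalIntegrable (fun τ : ℝ => (1 + τ) ^ (-(9 : ℝ) / 8)) volume 0 t ∧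
    (∫ τ in (0 : ℝ)..t, (1 + τ) ^ (-(9 : ℝ) / 8)) ≤ 8 := by
  have hco : ContinuousOn (fun τ : ℝ => (1 + τ) ^ (-(9 : ℝ) / 8)) (uIcc 0 t) := by
    intro τ hτ
    rw [uIcc_of_le ht] at hτ
    apply ContinuousAt.continuousWithinAt
    apply ContinuousAt.rpow_const (by fun_prop)
    left; linarith [hτ.1]
  have hi := hco.intervalIntegrable (μ := volume)
  refine ⟨hi, ?_⟩
  have hd : ∀ τ ∈ uIcc 0 t, HasDerivAt (fun τ : ℝ => -8 * (1 + τ) ^ (-(1 : ℝ) / 8))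
      ((1 + τ) ^ (-(9 : ℝ) / 8)) τ := by
    intro τ hτ
    rw [uIcc_of_le ht] at hτ
    have h1 : HasDerivAt (fun τ : ℝ => 1 + τ) 1 τ := (hasDerivAt_id τ).const_add 1
    have h2 := (h1.rpow_const (p := -(1 : ℝ) / 8) (Or.inl (by linarith [hτ.1]))).const_mul (-8)
    refine h2.congr_deriv ?_
    have e : (-(1 : ℝ) / 8 - 1) = -(9 : ℝ) / 8 := by norm_num
    rw [e]; ring
  rw [integral_eq_sub_of_hasDerivAt hd hi]
  have : 0 ≤ (1 + t) ^ (-(1 : ℝ) / 8) := by positivity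
  norm_num
  norm_num at this
  linarith


/-- Proposition 4.1 (basic `L²` energy estimate): in the setting of the pseudo-plastic
viscous conservation law with smoothed rarefaction wave `U` and perturbation `φ`, for
every `M > 0` there is `C₀ > 0`, depending only on `p, c₁, c₂, CU, um, up, f, M` (not on
`σ`, `U`, `T`, `φ`), such that if `‖φ(0)‖_{L²} + sup|φ(0)| ≤ M` then for all `t ∈ [0,T]`,
`‖φ(t)‖²_{L²} + ∫₀^t ∫ φ² ∂ₓU + ∫₀^t ∫ (1+(∂ₓφ)²)^((p-1)/2) (∂ₓφ)² ≤ C₀`. -/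
theorem basic_L2_energy_estimate
    (p c₁ c₂ : ℝ) (hp0 : 0 < p) (hp1 : p < 1) (hc1 : 0 < c₁) (hc12 : c₁ ≤ c₂)
    (f : ℝ → ℝ) (hf : ContDiff ℝ (⊤ : ℕ∞) f) (hconv : ∀ u : ℝ, 0 < deriv (deriv f) u)
    (um up CU : ℝ) (hu : um < up) (hCU : 0 < CU)
    (M : ℝ) (hM : 0 < M) :
    ∃ C₀ : ℝ, 0 < C₀ ∧
      ∀ σ : ℝ → ℝ, ContDiff ℝ (⊤ : ℕ∞) σ → σ 0 = 0 →
      (∀ v : ℝ, c₁ * (1 + v ^ 2) ^ ((p - 1) / 2) ≤ deriv σ v ∧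
        deriv σ v ≤ c₂ * (1 + v ^ 2) ^ ((p - 1) / 2)) →
      ∀ U : ℝ → ℝ → ℝ, ContDiff ℝ (⊤ : ℕ∞) (fun q : ℝ × ℝ => U q.1 q.2) →
      (∀ t : ℝ, 0 ≤ t → ∀ x : ℝ,
        deriv (fun s => U s x) t + deriv (fun y => f (U t y)) x = 0) →
      (∀ t : ℝ, 0 ≤ t → ∀ x : ℝ, um < U t x ∧ U t x < up) →
      (∀ t : ℝ, 0 ≤ t → ∀ x : ℝ, 0 < deriv (U t) x) →
      (∀ t : ℝ, 0 ≤ t → ∀ x : ℝ, deriv (U t) x ≤ CU * (1 + t)⁻¹) →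
      (∀ t : ℝ, 0 ≤ t → L2norm (deriv (U t)) ≤ CU * (1 + t) ^ (-(1 : ℝ) / 2)) →
      (∀ t : ℝ, 0 ≤ t → (∫ x : ℝ, |deriv (deriv (U t)) x|) ≤ CU * (1 + t)⁻¹) →
      (∀ t : ℝ, 0 ≤ t → ∀ x : ℝ,
        L2norm (deriv (deriv (U t))) + |deriv (deriv (U t)) x|
          ≤ CU * (1 + t) ^ (-(9 : ℝ) / 8)) →
      (∀ t : ℝ, 0 ≤ t →
        L2norm (deriv (deriv (deriv (U t)))) ≤ CU * (1 + t) ^ (-(9 : ℝ) / 8)) →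
      (∀ t : ℝ, 0 ≤ t → ∀ x : ℝ,
        L2norm (fun y => deriv (fun s => deriv (U s) y) t)
          + |deriv (fun s => deriv (U s) x) t| ≤ CU * (1 + t)⁻¹) →
      ∀ T : ℝ, 0 < T →
      ∀ φ : ℝ → ℝ → ℝ, ContDiff ℝ (⊤ : ℕ∞) (fun q : ℝ × ℝ => φ q.1 q.2) →
      (∀ t ∈ Icc (0 : ℝ) T, ∀ x : ℝ,
        deriv (fun s => φ s x) t
          + deriv (fun y => f (U t y + φ t y) - f (U t y)) x
          - deriv (fun y => σ (deriv (U t) y + deriv (φ t) y) - σ (deriv (U t) y)) x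
        = deriv (fun y => σ (deriv (U t) y)) x) →
      (∃ B : ℝ, ∀ t ∈ Icc (0 : ℝ) T, ∀ x : ℝ,
        |φ t x| + |deriv (φ t) x| + |deriv (deriv (φ t)) x|
          + |deriv (deriv (deriv (φ t))) x| + |deriv (fun s => deriv (φ s) x) t| ≤ B) →
      (∀ t ∈ Icc (0 : ℝ) T,
        Integrable (fun x : ℝ => (φ t x) ^ 2) ∧
        Integrable (fun x : ℝ => (deriv (φ t) x) ^ 2) ∧
        Integrable (fun x : ℝ => (deriv (deriv (φ t)) x) ^ 2) ∧
        Integrable (fun x : ℝ => (deriv (deriv (deriv (φ t))) x) ^ 2) ∧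
        Integrable (fun x : ℝ => (deriv (fun s => deriv (φ s) x) t) ^ 2)) →
      (∃ B : ℝ, ∀ t ∈ Icc (0 : ℝ) T,
        (∫ x : ℝ, (φ t x) ^ 2) + (∫ x : ℝ, (deriv (φ t) x) ^ 2)
          + (∫ x : ℝ, (deriv (deriv (φ t)) x) ^ 2)
          + (∫ x : ℝ, (deriv (deriv (deriv (φ t))) x) ^ 2)
          + (∫ x : ℝ, (deriv (fun s => deriv (φ s) x) t) ^ 2) ≤ B) →
      (∀ t ∈ Icc (0 : ℝ) T,
        Tendsto (φ t) atTop (nhds 0) ∧ Tendsto (φ t) atBot (nhds 0) ∧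
        Tendsto (deriv (φ t)) atTop (nhds 0) ∧ Tendsto (deriv (φ t)) atBot (nhds 0) ∧
        Tendsto (deriv (deriv (φ t))) atTop (nhds 0) ∧
        Tendsto (deriv (deriv (φ t))) atBot (nhds 0)) →
      L2norm (φ 0) + (⨆ x : ℝ, |φ 0 x|) ≤ M →
      ∀ t ∈ Icc (0 : ℝ) T,
        (∫ x : ℝ, (φ t x) ^ 2)
          + (∫ τ in (0:ℝ)..t, ∫ x : ℝ, (φ τ x) ^ 2 * deriv (U τ) x)
          + (∫ τ in (0:ℝ)..t, ∫ x : ℝ,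
              (1 + (deriv (φ τ) x) ^ 2) ^ ((p - 1) / 2) * (deriv (φ τ) x) ^ 2)
        ≤ C₀ := by
  have hc2 : 0 < c₂ := hc1.trans_le hc12
  have hf1 : ContDiff ℝ (⊤ : ℕ∞) (deriv f) := (contDiff_infty_iff_deriv.1 hf).2
  have hf2 : ContDiff ℝ (⊤ : ℕ∞) (deriv (deriv f)) := (contDiff_infty_iff_deriv.1 hf1).2
  have df0 : ∀ u, HasDerivAt f (deriv f u) u := fun u =>
    (hf.differentiable (by simp)).differentiableAt.hasDerivAt
  have df1 : ∀ u, HasDerivAt (deriv f) (deriv (deriv f) u) u := fun u =>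
    (hf1.differentiable (by simp)).differentiableAt.hasDerivAt
  -- constants
  obtain ⟨L0, hL0⟩ := (isCompact_Icc (a := um - M) (b := up + M)).exists_bound_of_continuousOn
      (f := f) hf.continuous.continuousOn
  obtain ⟨L1, hL1⟩ := (isCompact_Icc (a := um - M) (b := up + M)).exists_bound_of_continuousOn
      (f := deriv f) hf1.continuous.continuousOn
  obtain ⟨L2, hL2⟩ := (isCompact_Icc (a := um - M) (b := up + M)).exists_bound_of_continuousOn
      (f := deriv (deriv f)) hf2.continuous.continuousOn
  obtain ⟨um0, hum0, hmin⟩ := (isCompact_Icc (a := um - M) (b := up + M)).exists_isMinOn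
      ⟨um, by constructor <;> linarith⟩ hf2.continuous.continuousOn
  set m := deriv (deriv f) um0 with hmdef
  have hm0 : 0 < m := hconv um0
  have hm : ∀ u ∈ Icc (um - M) (up + M), m ≤ deriv (deriv f) u := fun u hu => hmin hu
  set c := c₁ * (2 * (1 + CU ^ 2)) ^ ((p - 1) / 2) with hcdef
  have hc0 : 0 < c := by positivity
  set K := 16 * c₂ * CU with hK
  have hK0 : 0 < K := by positivity
  set Q := M ^ 2 + K * (M + K) with hQ
  have hQ0 : 0 < Q := by positivity
  refine ⟨Q + Q / m + Q / (2 * c), by positivity, ?_⟩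
  intro σ hσs hσ0 hσ U hU hUeq hUran hUpos hUx hUxL2 hUxxL1 hUxx hUxxx hUtx T hT φ hφ hPDE
    ⟨B, hB⟩ hint ⟨B2, hB2⟩ hlim hinit
  have h0T : (0 : ℝ) ∈ Icc 0 T := ⟨le_rfl, hT.le⟩
  have hσ1 : ContDiff ℝ (⊤ : ℕ∞) (deriv σ) := (contDiff_infty_iff_deriv.1 hσs).2
  have dσ : ∀ u, HasDerivAt σ (deriv σ u) u := fun u =>
    (hσs.differentiable (by simp)).differentiableAt.hasDerivAt
  have sb := aux_sigma_bd p c₁ c₂ hp1 hc1 hc12 σ hσ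
  -- partial derivatives
  have cU1 := aux_cd_x hU
  have cU2 := aux_cd_x (G := fun t => deriv (U t)) cU1
  have cφ1 := aux_cd_x hφ
  have cφ2 := aux_cd_x (G := fun t => deriv (φ t)) cφ1
  have cφt := aux_cd_t hφ
  have dU := fun t => aux_hd_x hU t
  have dU1 : ∀ t x, HasDerivAt (deriv (U t)) (deriv (deriv (U t)) x) x := fun t =>
    aux_hd_x (G := fun t => deriv (U t)) cU1 t
  have dφ := fun t => aux_hd_x hφ t
  have dφ1 : ∀ t x, HasDerivAt (deriv (φ t)) (deriv (deriv (φ t)) x) x := fun t =>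
    aux_hd_x (G := fun t => deriv (φ t)) cφ1 t
  have slice : ∀ t : ℝ, Continuous fun x : ℝ => (t, x) := fun t => by fun_prop
  -- bounds on U
  have bUxx : ∀ t : ℝ, 0 ≤ t → ∀ x : ℝ,
      |deriv (deriv (U t)) x| ≤ CU * (1 + t) ^ (-(9 : ℝ) / 8) := by
    intro t ht x
    have := hUxx t ht x
    have h0 : 0 ≤ L2norm (deriv (deriv (U t))) := by unfold L2norm; positivity
    linarith
  have nUxx : ∀ t : ℝ, 0 ≤ t →
      (∫ x, deriv (deriv (U t)) x ^ 2) ^ ((1 : ℝ) / 2) ≤ CU * (1 + t) ^ (-(9 : ℝ) / 8) := by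
    intro t ht
    have := hUxx t ht 0
    unfold L2norm at this
    linarith [abs_nonneg (deriv (deriv (U t)) 0)]
  have bUx : ∀ t : ℝ, 0 ≤ t → ∀ x, deriv (U t) x ≤ CU := by
    intro t ht x
    refine (hUx t ht x).trans ?_
    have : (1 + t)⁻¹ ≤ 1 := inv_le_one_of_one_le₀ (by linarith)
    nlinarith
  have iUxx : ∀ t : ℝ, 0 ≤ t → Integrable (fun x => deriv (deriv (U t)) x ^ 2) := fun t ht =>
    aux_Uxx_sq_integrable f hf um up CU hCU U hU hconv hUeq hUran hUpos hUx bUxx t ht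
  have sUxx : ∀ t : ℝ, 0 ≤ t → (∫ x, deriv (deriv (U t)) x ^ 2) ≤ CU ^ 2 := by
    intro t ht
    have h1 := nUxx t ht
    have h2 : (1 + t) ^ (-(9 : ℝ) / 8) ≤ 1 :=
      Real.rpow_le_one_of_one_le_of_nonpos (by linarith) (by norm_num)
    have h0 : 0 ≤ ∫ x, deriv (deriv (U t)) x ^ 2 := integral_nonneg fun x => sq_nonneg _
    rw [← Real.sqrt_eq_rpow] at h1
    have h3 : Real.sqrt (∫ x, deriv (deriv (U t)) x ^ 2) ≤ CU := h1.trans (by nlinarith)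
    exact (Real.sqrt_le_left hCU.le).1 h3
  -- the equation in expanded form
  have hw : ∀ t ∈ Icc (0 : ℝ) T, ∀ x, deriv (fun s => φ s x) t
      = -(deriv f (U t x + φ t x) * (deriv (U t) x + deriv (φ t) x)
          - deriv f (U t x) * deriv (U t) x)
        + deriv σ (deriv (U t) x + deriv (φ t) x)
          * (deriv (deriv (U t)) x + deriv (deriv (φ t)) x) := by
    intro t ht x
    have h := hPDE t ht x
    have a1 : HasDerivAt (fun y => f (U t y + φ t y))
        (deriv f (U t x + φ t x) * (deriv (U t) x + deriv (φ t) x)) x :=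
      (df0 _).comp x ((dU t x).add (dφ t x))
    have a2 : HasDerivAt (fun y => f (U t y)) (deriv f (U t x) * deriv (U t) x) x :=
      (df0 _).comp x (dU t x)
    have a3 : HasDerivAt (fun y => σ (deriv (U t) y + deriv (φ t) y))
        (deriv σ (deriv (U t) x + deriv (φ t) x)
          * (deriv (deriv (U t)) x + deriv (deriv (φ t)) x)) x :=
      (dσ _).comp x ((dU1 t x).add (dφ1 t x))
    have a4 : HasDerivAt (fun y => σ (deriv (U t) y))
        (deriv σ (deriv (U t) x) * deriv (deriv (U t)) x) x :=
      (dσ _).comp x (dU1 t x)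
    have b1 : deriv (fun y => f (U t y + φ t y) - f (U t y)) x = _ := (a1.sub a2).deriv
    have b2 : deriv (fun y => σ (deriv (U t) y + deriv (φ t) y) - σ (deriv (U t) y)) x = _ :=
      (a3.sub a4).deriv
    rw [b1, b2, a4.deriv] at h
    linarith
  -- pointwise bounds on φ
  have bφ : ∀ t ∈ Icc (0 : ℝ) T, ∀ x, |φ t x| ≤ B ∧ |deriv (φ t) x| ≤ B := by
    intro t ht x
    have := hB t ht x
    constructor <;> linarith [abs_nonneg (φ t x), abs_nonneg (deriv (φ t) x),
      abs_nonneg (deriv (deriv (φ t)) x), abs_nonneg (deriv (deriv (deriv (φ t))) x),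
      abs_nonneg (deriv (fun s => deriv (φ s) x) t)]
  -- initial data
  have hn0 : 0 ≤ L2norm (φ 0) := by unfold L2norm; positivity
  have hs0 : 0 ≤ ⨆ x : ℝ, |φ 0 x| := Real.iSup_nonneg fun x => abs_nonneg _
  have hφ0 : ∀ x, |φ 0 x| ≤ M := by
    intro x
    have hbdd : BddAbove (range fun x : ℝ => |φ 0 x|) := by
      refine ⟨B, ?_⟩
      rintro _ ⟨y, rfl⟩
      exact (bφ 0 h0T y).1
    have := le_ciSup hbdd x
    linarith
  have hE0 : (∫ x, φ 0 x ^ 2) ≤ M ^ 2 := by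
    have h1 : L2norm (φ 0) ≤ M := by linarith
    unfold L2norm at h1
    rw [← Real.sqrt_eq_rpow] at h1
    exact (Real.sqrt_le_left hM.le).1 h1
  -- maximum principle
  have hrange : ∀ t ∈ Icc (0 : ℝ) T, ∀ x, U t x + φ t x ∈ Icc (um - M) (up + M) := by
    set N := |um| + |up| + B with hN
    obtain ⟨L, hL⟩ := (isCompact_Icc (a := -N) (b := N)).exists_bound_of_continuousOn
      (f := deriv f) hf1.continuous.continuousOn
    have hbd : ∀ t ∈ Icc (0 : ℝ) T, ∀ x, |U t x + φ t x| ≤ N := by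
      intro t ht x
      have h1 := hUran t ht.1 x
      have h2 := (bφ t ht x).1
      have h3 : |U t x| ≤ |um| + |up| := by
        rw [abs_le]
        constructor
        · linarith [neg_abs_le um, abs_nonneg up]
        · linarith [le_abs_self up, abs_nonneg um]
      exact (abs_add_le _ _).trans (by linarith)
    have hsm : ContDiff ℝ (⊤ : ℕ∞) (fun q : ℝ × ℝ => (fun t x => U t x + φ t x) q.1 q.2) :=
      hU.add hφ
    have ex : ∀ t x, HasDerivAt (fun x => U t x + φ t x) (deriv (U t) x + deriv (φ t) x) x :=
      fun t x => (dU t x).add (dφ t x)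
    have ex' : ∀ t, deriv (fun x => U t x + φ t x) = fun x => deriv (U t) x + deriv (φ t) x :=
      fun t => funext fun x => (ex t x).deriv
    have exx : ∀ t x, deriv (deriv (fun x => U t x + φ t x)) x
        = deriv (deriv (U t)) x + deriv (deriv (φ t)) x := by
      intro t x
      rw [ex' t]
      exact ((dU1 t x).add (dφ1 t x)).deriv
    have et : ∀ t x, deriv (fun s => U s x + φ s x) t
        = deriv (fun s => U s x) t + deriv (fun s => φ s x) t := fun t x =>
      ((aux_hd_t hU t x).add (aux_hd_t hφ t x)).deriv
    have hlaw : ∀ t ∈ Icc (0 : ℝ) T, ∀ x, deriv (fun s => U s x + φ s x) t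
        = -deriv f (U t x + φ t x) * deriv (fun x => U t x + φ t x) x
          + deriv σ (deriv (U t) x + deriv (φ t) x)
            * deriv (deriv (fun x => U t x + φ t x)) x := by
      intro t ht x
      rw [et, exx, (ex t x).deriv, hw t ht x]
      have h1 := hUeq t ht.1 x
      have a2 : HasDerivAt (fun y => f (U t y)) (deriv f (U t x) * deriv (U t) x) x :=
        (df0 _).comp x (dU t x)
      rw [a2.deriv] at h1
      linarith
    have haL : ∀ t ∈ Icc (0 : ℝ) T, ∀ x, |-deriv f (U t x + φ t x)| ≤ L := by
      intro t ht x
      rw [abs_neg]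
      exact hL _ (abs_le.1 (hbd t ht x))
    intro t ht x
    constructor
    · have hneg := aux_max_principle T hT (fun t x => -(U t x + φ t x)) hsm.neg
        (fun t x => -deriv f (U t x + φ t x)) (fun t x => deriv σ (deriv (U t) x + deriv (φ t) x))
        L c₂ N (-(um - M)) haL (fun t _ x => sb _)
        (fun t ht x => by simp only [abs_neg]; exact hbd t ht x) ?_ ?_ t ht x
      · linarith
      · intro t ht x
        have n1 : deriv (fun s => -(U s x + φ s x)) t = -deriv (fun s => U s x + φ s x) t :=
          deriv.fun_neg
        have n2 : deriv (fun y => -(U t y + φ t y)) = fun y => -deriv (fun y => U t y + φ t y) y :=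
          funext fun y => deriv.fun_neg
        have n3 : deriv (fun y => -deriv (fun y => U t y + φ t y) y) x
          = -deriv (deriv (fun y => U t y + φ t y)) x := deriv.fun_neg
        simp only [n1, n2, n3]
        rw [hlaw t ht x]
        ring
      · intro x
        have := abs_le.1 (hφ0 x)
        have := hUran 0 le_rfl x
        linarith
    · refine aux_max_principle T hT (fun t x => U t x + φ t x) hsm
        (fun t x => -deriv f (U t x + φ t x)) (fun t x => deriv σ (deriv (U t) x + deriv (φ t) x))
        L c₂ N (up + M) haL (fun t _ x => sb _) hbd hlaw ?_ t ht x
      intro x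
      have := abs_le.1 (hφ0 x)
      have := hUran 0 le_rfl x
      linarith
  have hUrange : ∀ t ∈ Icc (0 : ℝ) T, ∀ x, U t x ∈ Icc (um - M) (up + M) := by
    intro t ht x
    have := hUran t ht.1 x
    constructor <;> linarith
  have hL2n : 0 ≤ L2 := (norm_nonneg _).trans (hL2 _ hum0)
  have hL1n : 0 ≤ L1 := (norm_nonneg _).trans (hL1 _ hum0)
  set C3 := L2 * CU + L1 + 2 * c₂ with hC3
  have hC3n : 0 ≤ C3 := by positivity
  have hpt : ∀ t ∈ Icc (0 : ℝ) T, ∀ x, |φ t x * deriv (fun s => φ s x) t|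
      ≤ C3 * (φ t x ^ 2 + deriv (φ t) x ^ 2 + deriv (deriv (φ t)) x ^ 2
        + deriv (deriv (U t)) x ^ 2) := by
    intro t ht x
    refine aux_pointwise L1 L2 c₂ CU (φ t x) (deriv (φ t) x) (deriv (deriv (φ t)) x)
      (deriv (U t) x) (deriv (deriv (U t)) x) (deriv f (U t x + φ t x)) (deriv f (U t x))
      (deriv σ (deriv (U t) x + deriv (φ t) x)) _ (hUpos t ht.1 x) (bUx t ht.1 x)
      (hL1 _ (hrange t ht x)) ?_ ?_ hL2n (hw t ht x)
    · obtain ⟨ξ, hξ, he⟩ := aux_mvt _ _ df1 (U t x) (U t x + φ t x)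
      have hξI := uIcc_subset_Icc (hUrange t ht x) (hrange t ht x) hξ
      rw [he, add_sub_cancel_left, abs_mul]
      exact mul_le_mul_of_nonneg_right (hL2 ξ hξI) (abs_nonneg _)
    · rw [abs_of_nonneg (sb _).1]; exact (sb _).2
  -- integral bounds
  have nn : ∀ g : ℝ → ℝ, 0 ≤ ∫ x, g x ^ 2 := fun g => integral_nonneg fun x => sq_nonneg _
  have hBs : ∀ t ∈ Icc (0 : ℝ) T, (∫ x, φ t x ^ 2) ≤ B2 ∧ (∫ x, deriv (φ t) x ^ 2) ≤ B2 ∧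
      (∫ x, deriv (deriv (φ t)) x ^ 2) ≤ B2 := by
    intro t ht
    have h := hB2 t ht
    have n1 := nn (φ t)
    have n2 := nn (deriv (φ t))
    have n3 := nn (deriv (deriv (φ t)))
    have n4 := nn (deriv (deriv (deriv (φ t))))
    have n5 := nn (fun x => deriv (fun s => deriv (φ s) x) t)
    refine ⟨?_, ?_, ?_⟩ <;> linarith
  have hiw : ∀ t ∈ Icc (0 : ℝ) T, Integrable (fun x => φ t x * deriv (fun s => φ s x) t) ∧
      (∫ x, ‖φ t x * deriv (fun s => φ s x) t‖) ≤ C3 * (B2 + B2 + B2 + CU ^ 2) := by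
    intro t ht
    obtain ⟨j0, j1, j2, -, -⟩ := hint t ht
    have j3 := iUxx t ht.1
    have hdom := (((j0.add j1).add j2).add j3).const_mul C3
    have hcont : Continuous (fun x => φ t x * deriv (fun s => φ s x) t) :=
      (hφ.continuous.mul cφt.continuous).comp (slice t)
    have hI : Integrable (fun x => φ t x * deriv (fun s => φ s x) t) := by
      refine Integrable.mono' hdom hcont.aestronglyMeasurable ?_
      filter_upwards with x
      exact hpt t ht x
    refine ⟨hI, ?_⟩
    have h1 : (∫ x, ‖φ t x * deriv (fun s => φ s x) t‖) ≤ ∫ x, C3 * (φ t x ^ 2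
        + deriv (φ t) x ^ 2 + deriv (deriv (φ t)) x ^ 2 + deriv (deriv (U t)) x ^ 2) :=
      integral_mono hI.norm hdom (fun x => hpt t ht x)
    refine h1.trans ?_
    rw [MeasureTheory.integral_const_mul]
    apply mul_le_mul_of_nonneg_left _ hC3n
    have e1 := integral_add ((j0.add j1).add j2) j3
    have e2 := integral_add (j0.add j1) j2
    have e3 := integral_add j0 j1
    simp only [Pi.add_apply] at e1 e2 e3
    rw [e1, e2, e3]
    obtain ⟨k0, k1, k2⟩ := hBs t ht
    have k3 := sUxx t ht.1
    linarith
  -- spatial inequality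
  have hspat : ∀ t ∈ Icc (0 : ℝ) T, (∫ x, φ t x * deriv (fun s => φ s x) t)
      ≤ - (m / 2 * ∫ x, φ t x ^ 2 * deriv (U t) x)
      - c * (∫ x, (1 + deriv (φ t) x ^ 2) ^ ((p - 1) / 2) * deriv (φ t) x ^ 2)
      + c₂ * ((∫ x, φ t x ^ 2) ^ ((1 : ℝ) / 2)
        * (∫ x, deriv (deriv (U t)) x ^ 2) ^ ((1 : ℝ) / 2)) := by
    intro t ht
    obtain ⟨j0, j1, j2, -, -⟩ := hint t ht
    exact aux_spatial p c₁ c₂ hp1 hc1 hc12 f hf.continuous df0 df1 (um - M) (up + M) m L0 L2 CU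
      B C3 hm0 hm hL0 hL2 σ dσ hσ1.continuous hσ (U t) (deriv (U t)) (deriv (deriv (U t)))
      (φ t) (deriv (φ t)) (deriv (deriv (φ t))) (fun x => deriv (fun s => φ s x) t)
      (dU t) (dU1 t) (cU2.continuous.comp (slice t)) (dφ t) (dφ1 t)
      (cφt.continuous.comp (slice t)) (hUrange t ht) (hrange t ht) (hUpos t ht.1) (bUx t ht.1)
      (fun x => (bφ t ht x).2) j0 j1 j2 (iUxx t ht.1) (hlim t ht).1 (hlim t ht).2.1
      (hw t ht) (hpt t ht)
  -- integrability in time of the two good terms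
  set J1 : ℝ → ℝ := fun τ => ∫ x, φ τ x ^ 2 * deriv (U τ) x with hJ1
  set J2 : ℝ → ℝ := fun τ =>
    ∫ x, (1 + deriv (φ τ) x ^ 2) ^ ((p - 1) / 2) * deriv (φ τ) x ^ 2 with hJ2
  set E : ℝ → ℝ := fun τ => ∫ x, φ τ x ^ 2 with hE
  set I : ℝ → ℝ := fun τ => ∫ x, φ τ x * deriv (fun s => φ s x) τ with hI
  have iJ1 : ∀ t ∈ Icc (0 : ℝ) T, IntervalIntegrable J1 volume 0 t := by
    intro t ht
    have hc1' : Continuous (Function.uncurry fun τ x => φ τ x ^ 2 * deriv (U τ) x) :=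
      (hφ.continuous.pow 2).mul cU1.continuous
    refine aux_intervalIntegrable _ hc1' t (CU * B2) ht.1 ?_
    intro τ hτ
    have hτT : τ ∈ Icc (0 : ℝ) T := ⟨hτ.1, hτ.2.trans ht.2⟩
    have j0 := (hint τ hτT).1
    have hb : ∀ x, ‖φ τ x ^ 2 * deriv (U τ) x‖ ≤ CU * φ τ x ^ 2 := by
      intro x
      rw [norm_mul, Real.norm_eq_abs, Real.norm_eq_abs, abs_of_pos (hUpos τ hτ.1 x),
        abs_of_nonneg (sq_nonneg _)]
      have := mul_le_mul_of_nonneg_left (bUx τ hτ.1 x) (sq_nonneg (φ τ x))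
      linarith
    have hi : Integrable (fun x => φ τ x ^ 2 * deriv (U τ) x) :=
      Integrable.mono' (j0.const_mul CU) (hc1'.comp (slice τ)).aestronglyMeasurable
        (Filter.Eventually.of_forall hb)
    refine ⟨hi, ?_⟩
    refine (integral_mono hi.norm (j0.const_mul CU) hb).trans ?_
    rw [MeasureTheory.integral_const_mul]
    exact mul_le_mul_of_nonneg_left (hBs τ hτT).1 hCU.le
  have iJ2 : ∀ t ∈ Icc (0 : ℝ) T, IntervalIntegrable J2 volume 0 t := by
    intro t ht
    have hc1' : Continuous (Function.uncurry fun τ x =>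
        (1 + deriv (φ τ) x ^ 2) ^ ((p - 1) / 2) * deriv (φ τ) x ^ 2) := by
      have hcc := cφ1.continuous
      refine Continuous.mul (Continuous.rpow_const (continuous_const.add (hcc.pow 2)) ?_)
        (hcc.pow 2)
      intro q; left; positivity
    refine aux_intervalIntegrable _ hc1' t B2 ht.1 ?_
    intro τ hτ
    have hτT : τ ∈ Icc (0 : ℝ) T := ⟨hτ.1, hτ.2.trans ht.2⟩
    have j1 := (hint τ hτT).2.1
    have hb : ∀ x, ‖(1 + deriv (φ τ) x ^ 2) ^ ((p - 1) / 2) * deriv (φ τ) x ^ 2‖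
        ≤ deriv (φ τ) x ^ 2 := by
      intro x
      rw [Real.norm_eq_abs, abs_of_nonneg (by positivity)]
      have := mul_le_mul_of_nonneg_right (aux_rpow_le_one p (deriv (φ τ) x) hp1)
        (sq_nonneg (deriv (φ τ) x))
      linarith
    have hi : Integrable (fun x => (1 + deriv (φ τ) x ^ 2) ^ ((p - 1) / 2) * deriv (φ τ) x ^ 2) :=
      Integrable.mono' j1 (hc1'.comp (slice τ)).aestronglyMeasurable
        (Filter.Eventually.of_forall hb)
    exact ⟨hi, (integral_mono hi.norm j1 hb).trans (hBs τ hτT).2.1⟩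
  have iI : ∀ t ∈ Icc (0 : ℝ) T, IntervalIntegrable I volume 0 t := by
    intro t ht
    refine aux_intervalIntegrable (fun τ x => φ τ x * deriv (fun s => φ s x) τ)
      (hφ.continuous.mul cφt.continuous) t (C3 * (B2 + B2 + B2 + CU ^ 2)) ht.1 ?_
    intro τ hτ
    exact hiw τ ⟨hτ.1, hτ.2.trans ht.2⟩
  -- supremum of the energy
  set S := sSup (E '' Icc 0 T) with hS
  have hbdd : BddAbove (E '' Icc 0 T) := by
    refine ⟨B2, ?_⟩
    rintro _ ⟨t, ht, rfl⟩
    exact (hBs t ht).1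
  have hES : ∀ t ∈ Icc (0 : ℝ) T, E t ≤ S := fun t ht => le_csSup hbdd ⟨t, ht, rfl⟩
  have hEn : ∀ t, 0 ≤ E t := fun t => nn (φ t)
  have hS0 : 0 ≤ S := (hEn 0).trans (hES 0 h0T)
  -- main inequality
  have hmain : ∀ t ∈ Icc (0 : ℝ) T,
      E t + m * (∫ τ in (0 : ℝ)..t, J1 τ) + 2 * c * (∫ τ in (0 : ℝ)..t, J2 τ)
        ≤ M ^ 2 + K * Real.sqrt S := by
    intro t ht
    have hid := aux_energy_identity φ hφ t _ ht.1
      (fun τ hτ => (hint τ ⟨hτ.1, hτ.2.trans ht.2⟩).1)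
      (fun τ hτ => hiw τ ⟨hτ.1, hτ.2.trans ht.2⟩)
    obtain ⟨iw, bw⟩ := aux_time_weight t ht.1
    have hle : (∫ τ in (0 : ℝ)..t, 2 * I τ)
        ≤ ∫ τ in (0 : ℝ)..t, ((2 * c₂ * CU * Real.sqrt S) * (1 + τ) ^ (-(9 : ℝ) / 8)
          - (m * J1 τ + 2 * c * J2 τ)) := by
      refine intervalIntegral.integral_mono_on ht.1 ((iI t ht).const_mul 2)
        ((iw.const_mul _).sub (((iJ1 t ht).const_mul _).add ((iJ2 t ht).const_mul _))) ?_
      intro τ hτ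
      have hτT : τ ∈ Icc (0 : ℝ) T := ⟨hτ.1, hτ.2.trans ht.2⟩
      have h1 : I τ ≤ - (m / 2 * J1 τ) - c * J2 τ + c₂ * ((E τ) ^ ((1 : ℝ) / 2)
        * (∫ x, deriv (deriv (U τ)) x ^ 2) ^ ((1 : ℝ) / 2)) := hspat τ hτT
      have h2 : (E τ) ^ ((1 : ℝ) / 2) ≤ Real.sqrt S := by
        rw [← Real.sqrt_eq_rpow]
        exact Real.sqrt_le_sqrt (hES τ hτT)
      have h3 := nUxx τ hτ.1
      have h4 : (E τ) ^ ((1 : ℝ) / 2) * (∫ x, deriv (deriv (U τ)) x ^ 2) ^ ((1 : ℝ) / 2)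
          ≤ Real.sqrt S * (CU * (1 + τ) ^ (-(9 : ℝ) / 8)) :=
        mul_le_mul h2 h3 (Real.rpow_nonneg (nn _) _) (Real.sqrt_nonneg _)
      have h5 := mul_le_mul_of_nonneg_left h4 hc2.le
      linarith
    rw [intervalIntegral.integral_sub (iw.const_mul _)
        (((iJ1 t ht).const_mul _).add ((iJ2 t ht).const_mul _)),
      intervalIntegral.integral_add ((iJ1 t ht).const_mul _) ((iJ2 t ht).const_mul _),
      intervalIntegral.integral_const_mul (2 * c₂ * CU * Real.sqrt S),
      intervalIntegral.integral_const_mul m, intervalIntegral.integral_const_mul (2 * c)] at hle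
    have hid' : E t - E 0 = ∫ τ in (0 : ℝ)..t, 2 * I τ := hid
    have hk := mul_le_mul_of_nonneg_left bw
      (by positivity : 0 ≤ 2 * c₂ * CU * Real.sqrt S)
    have hE0' : E 0 ≤ M ^ 2 := hE0
    rw [hK]
    linarith
  have pJ1 : ∀ t ∈ Icc (0 : ℝ) T, 0 ≤ ∫ τ in (0 : ℝ)..t, J1 τ := by
    intro t ht
    refine intervalIntegral.integral_nonneg ht.1 fun τ hτ => integral_nonneg fun x => ?_
    exact mul_nonneg (sq_nonneg _) (hUpos τ hτ.1 x).le
  have pJ2 : ∀ t ∈ Icc (0 : ℝ) T, 0 ≤ ∫ τ in (0 : ℝ)..t, J2 τ := by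
    intro t ht
    refine intervalIntegral.integral_nonneg ht.1 fun τ hτ => integral_nonneg fun x => ?_
    positivity
  have hSle : S ≤ M ^ 2 + K * Real.sqrt S := by
    refine csSup_le ⟨_, 0, h0T, rfl⟩ ?_
    rintro _ ⟨t, ht, rfl⟩
    have h1 := hmain t ht
    have h2 := mul_nonneg hm0.le (pJ1 t ht)
    have h3 := mul_nonneg (by positivity : 0 ≤ 2 * c) (pJ2 t ht)
    linarith
  have hsq : Real.sqrt S ≤ M + K := by
    by_contra hcon
    push Not at hcon
    have h1 := Real.sq_sqrt hS0
    nlinarith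
  intro t ht
  have h1 := hmain t ht
  have h2 := mul_nonneg hm0.le (pJ1 t ht)
  have h3 := mul_nonneg (by positivity : 0 ≤ 2 * c) (pJ2 t ht)
  have h4 : K * Real.sqrt S ≤ K * (M + K) := mul_le_mul_of_nonneg_left hsq hK0.le
  have h5 := hEn t
  have g1 : E t ≤ Q := by linarith
  have g2 : (∫ τ in (0 : ℝ)..t, J1 τ) ≤ Q / m := by
    rw [le_div_iff₀ hm0]; linarith
  have g3 : (∫ τ in (0 : ℝ)..t, J2 τ) ≤ Q / (2 * c) := by
    rw [le_div_iff₀ (by positivity)]; linarith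
  exact add_le_add (add_le_add g1 g2) g3
end
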